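/- For all m, n ≥ 1, the 1-skeleton resistances satisfy the supermultiplicative estimate R_{m+n}^T ≥ (3/4) · R_m^T · R_n^T. -/

import Mathlib

/-!
# Supermultiplicativity of the 1-skeleton resistances

By definition of the effective resistance it suffices to bound minimal energies from above: given
potentials `f` on `G_m^T` and `g` on `G_n^T`, each equal to `0` on one side of the hexagon and to `1`
on the opposite side, there is such a potential `F` on `G_{m+n}^T` with
`E(F) ≤ (4/3) E(f) E(g)` (`compose`). Since the minimal energies are positive (`cap_pos`), taking
infima and inverting gives the estimate.

The function `F` is obtained by gluing. `T_{m+n}` arises from `T_m` by replacing every triangle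
`a b c` by a copy of the hexagon `T_n`, through the piecewise linear map `th a b c` whose value at
the corners is `a`, the midpoint of `a b`, `b`, and so on (`Tri.comp`, `Tri.decomp`). Averaging and
reflecting `g`, and taking the minimum with its mirror image, one obtains functions `ψ` and `ψ'` on
the hexagon of energy at most `E(g)` whose boundary values depend only on the barycentric coordinate
of `a`, respectively `c`, through one common profile (`exists_psi`). If `f a ≥ f b ≥ f c`, put
`F = f b + (f a - f b) ψ + (f c - f b) ψ'` on the copy over `a b c`. On the boundary of the triangle
this is a symmetric expression in the vertices, their `f`-values and weights, so the pieces fit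
together (`FT_wd`); this uses that the triangulations are geometric simplicial complexes (`cons`).

For the energy, let `u = f a - f b` and `w = f b - f c`. The piece over `a b c` has energy at most
`(u + w)² E(g) ≤ (2/3) (u² + w² + (u + w)²) E(g)` (`FT_En`), and the squared differences over the
sides of all triangles add up to at most `2 E(f)`, because an edge lies in at most two triangles and
has conductance at least `1` (`sum_S_le`).

All this is done in linear coordinates in which the corners of the hexagon have integer
coordinates; the linear map `Phi` transports the result to the regular hexagon (`RT_eq`). Depth `d`
in these coordinates corresponds to the triangulation `T_{d+1}`.
-/

/-!
Setup for the barycentric subdivision / hexacarpet resistance problem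
(Begué, Kelleher, Nelson, Panzo, Pellico, Teplyaev, "Resistance scaling
and the number of spanning trees ..." / Barlow–Bass type estimates).

We realize the repeated barycentric subdivision of a triangle via its
hexagonal planar embedding: for `n ≥ 1` the complex `T_n` is embedded
in the plane with the seven vertices of `T_1` sent to the corners and
the center of a regular hexagon, and deeper subdivisions computed by
taking barycenters.  The `n`-th level triangles are recorded as ordered
triples of points of the plane.
-/

noncomputable section

namespace BarycentricHexacarpet

attribute [local instance] Classical.propDecidable

/-- Points of the plane. -/
abbrev Pt : Type := ℝ × ℝ

/-- Barycenter of three points. -/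
def bary (a b c : Pt) : Pt := (3:ℝ)⁻¹ • (a + b + c)

/-- Midpoint (barycenter of an edge). -/
def mpt (a b : Pt) : Pt := (2:ℝ)⁻¹ • (a + b)

/-- The six triangles of the barycentric subdivision of the triangle `(a,b,c)`,
each recorded as (vertex, barycenter of an edge containing it, barycenter). -/
def children : Pt × Pt × Pt → Set (Pt × Pt × Pt) := fun t =>
  {(t.1, mpt t.1 t.2.1, bary t.1 t.2.1 t.2.2), (t.2.1, mpt t.1 t.2.1, bary t.1 t.2.1 t.2.2),
   (t.2.1, mpt t.2.1 t.2.2, bary t.1 t.2.1 t.2.2), (t.2.2, mpt t.2.1 t.2.2, bary t.1 t.2.1 t.2.2),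
   (t.1, mpt t.1 t.2.2, bary t.1 t.2.1 t.2.2), (t.2.2, mpt t.1 t.2.2, bary t.1 t.2.1 t.2.2)}

/-- The corners of the regular hexagon: `p_0, p_0', p_1, p_1', p_2, p_2'`
are the corners with indices `0, 1, 2, 3, 4, 5`. -/
def hexCorner (i : ℕ) : Pt := (Real.cos (i * (Real.pi / 3)), Real.sin (i * (Real.pi / 3)))

/-- The set of (ordered) triangles of the `n`-th barycentric subdivision `T_n`
of the triangle, in the hexagonal embedding (defined for `n ≥ 1`):  the six
triangles of `T_1` are the six sectors of the regular hexagon, and each further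
subdivision is barycentric. -/
def TriSet : ℕ → Set (Pt × Pt × Pt)
  | 0 => ∅
  | 1 => {t | ∃ i : Fin 6, t = (hexCorner i, hexCorner (i + 1), ((0:ℝ), (0:ℝ)))}
  | (n + 2) => ⋃ t ∈ TriSet (n + 1), children t

/-- `E_n^2`: the 2-simplexes (triangles) of `T_n`, as 3-element vertex sets. -/
def Simp2 (n : ℕ) : Set (Set Pt) :=
  {s | ∃ t ∈ TriSet n, s = {t.1, t.2.1, t.2.2}}

/-- `E_n^1`: the 1-simplexes (edges) of `T_n`, as 2-element vertex sets. -/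
def Simp1 (n : ℕ) : Set (Set Pt) :=
  {s | ∃ t ∈ TriSet n, s = {t.1, t.2.1} ∨ s = {t.2.1, t.2.2} ∨ s = {t.1, t.2.2}}

/-- `E_n^0`: the 0-simplexes (vertices) of `T_n`. -/
def Simp0 (n : ℕ) : Set Pt :=
  {p | ∃ t ∈ TriSet n, p = t.1 ∨ p = t.2.1 ∨ p = t.2.2}

/-- Conductances of the 1-skeleton graph `G_n^T`:  vertices `p ≠ q` are adjacent
iff `{p,q}` is an edge of `T_n`; the conductance is `2` if the edge is contained
in exactly one triangle of `T_n`, and `1` if it is contained in two triangles. -/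
def cT (n : ℕ) (p q : Pt) : ℝ :=
  if p ≠ q ∧ ({p, q} : Set Pt) ∈ Simp1 n then
    (if {f ∈ Simp2 n | p ∈ f ∧ q ∈ f}.ncard = 1 then 2 else 1)
  else 0

/-- Conductances of the (modified) hexacarpet graph `G_n^H`:  its vertex set is
`E_n^2 ∪ E_n^1`, an edge `e ∈ E_n^1` is adjacent to a triangle `f ∈ E_n^2` iff
`e` is a face of `f`, and every edge of the graph has conductance `1/2`. -/
def cH (n : ℕ) (u v : Set Pt) : ℝ :=
  if (u ∈ Simp1 n ∧ v ∈ Simp2 n ∧ u ⊆ v) ∨ (v ∈ Simp1 n ∧ u ∈ Simp2 n ∧ v ⊆ u)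
  then 1 / 2 else 0

/-- The energy of a potential `f` on a weighted graph with conductances `c`:
`E(f) = (1/2) ∑ c p q * (f p - f q)^2`. -/
def energy {V : Type} (c : V → V → ℝ) (f : V → ℝ) : ℝ :=
  (1 / 2) * ∑' p : V, ∑' q : V, c p q * (f p - f q) ^ 2

/-- The effective resistance between `A` and `B`:
`R(A,B) = (inf {E(f) : f ≡ 0 on A, f ≡ 1 on B})⁻¹`. -/
def effRes {V : Type} (c : V → V → ℝ) (A B : Set V) : ℝ :=
  (sInf {e : ℝ | ∃ f : V → ℝ, (∀ p ∈ A, f p = 0) ∧ (∀ p ∈ B, f p = 1) ∧ e = energy c f})⁻¹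

/-- The `i`-th closed side of the hexagon. -/
def hexSide (i : ℕ) : Set Pt := segment ℝ (hexCorner i) (hexCorner (i + 1))

/-- `L_i^{(n,T)}`: the vertices of `G_n^T` whose geometric realization lies in
the `i`-th closed side of the hexagon. -/
def LsetT (n i : ℕ) : Set Pt := {p ∈ Simp0 n | p ∈ hexSide i}

/-- `L_i^{(n,H)}`: the vertices of `G_n^H` whose geometric realization lies in
the `i`-th closed side of the hexagon. -/
def LsetH (n i : ℕ) : Set (Set Pt) :=
  {v ∈ Simp2 n ∪ Simp1 n | convexHull ℝ v ⊆ hexSide i}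

/-- `R_n^T`: the effective resistance in `G_n^T` between
`A_{(n)}^T = L_2^{(n,T)}` and `B_{(n)}^T = L_5^{(n,T)}`. -/
def RT (n : ℕ) : ℝ := effRes (cT n) (LsetT n 2) (LsetT n 5)

/-- `R_n`: the effective resistance in `G_n^H` between
`A_{(n)}^H = L_0^{(n,H)} ∪ L_1^{(n,H)}` and `B_{(n)}^H = L_3^{(n,H)} ∪ L_4^{(n,H)}`. -/
def RH (n : ℕ) : ℝ :=
  effRes (cH n) (LsetH n 0 ∪ LsetH n 1) (LsetH n 3 ∪ LsetH n 4)

end BarycentricHexacarpet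

namespace BarycentricHexacarpet

/-! ### The triangulations in linear coordinates -/

/-- The corners of the hexagon in the linear coordinates used below: the regular hexagon becomes the
hexagon with vertices `(1,0), (0,1), (-1,1), (-1,0), (0,-1), (1,-1)`, which avoids `√3`.
Index `6` repeats corner `0`, so that `cor i, cor (i + 1)` is a side for every `i < 6`. -/
def cor : ℕ → Pt
  | 0 => (1, 0)
  | 1 => (0, 1)
  | 2 => (-1, 1)
  | 3 => (-1, 0)
  | 4 => (0, -1)
  | 5 => (1, -1)
  | _ => (1, 0)

/-- `Tri d a b c`: `(a, b, c)` is a triangle of `T_{d+1}`, in linear coordinates and with its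
vertices listed in any order. The six sectors of the hexagon are the triangles at depth `0`; closing
under permutations makes a single `child` constructor enough. -/
inductive Tri : ℕ → Pt → Pt → Pt → Prop
  | base (i : ℕ) (hi : i < 6) : Tri 0 (cor i) (cor (i + 1)) 0
  | child {d a b c} : Tri d a b c → Tri (d + 1) a (mpt a b) (bary a b c)
  | swap {d a b c} : Tri d a b c → Tri d b a c
  | rot {d a b c} : Tri d a b c → Tri d b c a

/-- Twice the signed area of the triangle `a b c`. -/
def area (a b c : Pt) : ℝ := (b.1 - a.1) * (c.2 - a.2) - (b.2 - a.2) * (c.1 - a.1)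

lemma Tri.area_ne {d a b c} (h : Tri d a b c) : area a b c ≠ 0 := by
  induction h with
  | base i hi => interval_cases i <;> simp [cor, area]
  | @child d a b c _ ih =>
    have : area a (mpt a b) (bary a b c) = area a b c / 6 := by
      simp [area, mpt, bary]; ring
    rw [this]; exact div_ne_zero ih (by norm_num)
  | @swap d a b c _ ih =>
    have : area b a c = - area a b c := by simp [area]; ring
    rw [this]; exact neg_ne_zero.2 ih
  | @rot d a b c _ ih =>
    have : area b c a = area a b c := by simp [area]; ring
    rwa [this]

lemma Tri.ne12 {d a b c} (h : Tri d a b c) : a ≠ b := by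
  rintro rfl; exact h.area_ne (by simp [area])

lemma Tri.ne23 {d a b c} (h : Tri d a b c) : b ≠ c := h.rot.ne12

lemma Tri.ne13 {d a b c} (h : Tri d a b c) : a ≠ c := h.rot.rot.ne12.symm

/-- First barycentric coordinate with respect to sector `i`: `p = al i p • cor i + be i p • cor (i + 1)`. -/
def al (i : ℕ) (p : Pt) : ℝ := p.1 * (cor (i + 1)).2 - p.2 * (cor (i + 1)).1
/-- Second barycentric coordinate with respect to sector `i`. -/
def be (i : ℕ) (p : Pt) : ℝ := (cor i).1 * p.2 - (cor i).2 * p.1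

/-- The closed `i`-th sector of the hexagon, spanned by `0`, `cor i` and `cor (i + 1)`. -/
def Sec (i : ℕ) (p : Pt) : Prop := 0 ≤ al i p ∧ 0 ≤ be i p ∧ al i p + be i p ≤ 1

lemma al_mpt (i a b) : al i (mpt a b) = (al i a + al i b) / 2 := by simp [al, mpt]; ring
lemma be_mpt (i a b) : be i (mpt a b) = (be i a + be i b) / 2 := by simp [be, mpt]; ring
lemma al_bary (i a b c) : al i (bary a b c) = (al i a + al i b + al i c) / 3 := by
  simp [al, bary]; ring
lemma be_bary (i a b c) : be i (bary a b c) = (be i a + be i b + be i c) / 3 := by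
  simp [be, bary]; ring

lemma Sec.mpt {i a b} (ha : Sec i a) (hb : Sec i b) : Sec i (mpt a b) := by
  unfold Sec at *; rw [al_mpt, be_mpt]; refine ⟨?_, ?_, ?_⟩ <;> linarith
lemma Sec.bary {i a b c} (ha : Sec i a) (hb : Sec i b) (hc : Sec i c) : Sec i (bary a b c) := by
  unfold Sec at *; rw [al_bary, be_bary]; refine ⟨?_, ?_, ?_⟩ <;> linarith

/-- Every triangle lies in one of the six sectors. -/
lemma Tri.sec {d a b c} (h : Tri d a b c) : ∃ i < 6, Sec i a ∧ Sec i b ∧ Sec i c := by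
  induction h with
  | base i hi =>
    refine ⟨i, hi, ?_⟩
    interval_cases i <;> simp [cor, Sec, al, be]
  | child _ ih =>
    obtain ⟨i, hi, ha, hb, hc⟩ := ih
    exact ⟨i, hi, ha, ha.mpt hb, ha.bary hb hc⟩
  | swap _ ih =>
    obtain ⟨i, hi, ha, hb, hc⟩ := ih
    exact ⟨i, hi, hb, ha, hc⟩
  | rot _ ih =>
    obtain ⟨i, hi, ha, hb, hc⟩ := ih
    exact ⟨i, hi, hb, hc, ha⟩

/-- The finitely supported function putting the weights `x, y, z` on the points `a, b, c`. A convex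
combination of the vertices of a triangle is compared with another one through this function, which
forgets the order of the vertices and the vertices of weight `0`. -/
def wf (a b c : Pt) (x y z : ℝ) (p : Pt) : ℝ :=
  (if p = a then x else 0) + (if p = b then y else 0) + (if p = c then z else 0)

/-- Every convex combination of `a, b, c` is one of `u, v, w` with the same weight function; this
holds when `(a, b, c)` is a permutation of `(u, v, w)`. -/
def Rep (a b c u v w : Pt) : Prop := ∀ x y z : ℝ, 0 ≤ x → 0 ≤ y → 0 ≤ z → x + y + z = 1 →
  ∃ α β γ : ℝ, 0 ≤ α ∧ 0 ≤ β ∧ 0 ≤ γ ∧ α + β + γ = 1 ∧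
    x • a + y • b + z • c = α • u + β • v + γ • w ∧ wf a b c x y z = wf u v w α β γ

lemma Rep.refl (a b c : Pt) : Rep a b c a b c :=
  fun x y z hx hy hz h => ⟨x, y, z, hx, hy, hz, h, rfl, rfl⟩

lemma Rep.swap {a b c u v w : Pt} (h : Rep a b c u v w) : Rep b a c u v w := by
  intro x y z hx hy hz hs
  obtain ⟨α, β, γ, h1, h2, h3, h4, h5, h6⟩ := h y x z hy hx hz (by linarith)
  refine ⟨α, β, γ, h1, h2, h3, h4, ?_, ?_⟩
  · rw [← h5]; abel
  · rw [← h6]; funext p; simp only [wf]; ring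

lemma Rep.rot {a b c u v w : Pt} (h : Rep a b c u v w) : Rep b c a u v w := by
  intro x y z hx hy hz hs
  obtain ⟨α, β, γ, h1, h2, h3, h4, h5, h6⟩ := h z x y hz hx hy (by linarith)
  refine ⟨α, β, γ, h1, h2, h3, h4, ?_, ?_⟩
  · rw [← h5]; abel
  · rw [← h6]; funext p; simp only [wf]; ring

/-- Up to a permutation, a triangle at depth `0` is a sector. -/
lemma Tri.inv_zero {k a b c} (h : Tri k a b c) (hk : k = 0) :
    ∃ i < 6, Rep a b c (cor i) (cor (i + 1)) 0 := by
  induction h with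
  | base i hi => exact ⟨i, hi, Rep.refl _ _ _⟩
  | child _ _ => simp at hk
  | swap _ ih => obtain ⟨i, hi, h⟩ := ih hk; exact ⟨i, hi, h.swap⟩
  | rot _ ih => obtain ⟨i, hi, h⟩ := ih hk; exact ⟨i, hi, h.rot⟩

/-- Up to a permutation, a triangle at depth `d + 1` is a child of one at depth `d`. -/
lemma Tri.inv_succ {k a b c} (h : Tri k a b c) (d : ℕ) (hk : k = d + 1) :
    ∃ u v w, Tri d u v w ∧ Rep a b c u (mpt u v) (bary u v w) := by
  induction h with
  | base i hi => simp at hk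
  | @child d' a b c h _ =>
    obtain rfl : d' = d := by omega
    exact ⟨a, b, c, h, Rep.refl _ _ _⟩
  | swap _ ih => obtain ⟨u, v, w, h1, h⟩ := ih hk; exact ⟨u, v, w, h1, h.swap⟩
  | rot _ ih => obtain ⟨u, v, w, h1, h⟩ := ih hk; exact ⟨u, v, w, h1, h.rot⟩

/-! ### Barycentric weights do not depend on the triangle -/

lemma wf_cases {a b c : Pt} (hab : a ≠ b) (hbc : b ≠ c) (hac : a ≠ c) (x y z : ℝ) (p : Pt) :
    (p = a ∧ wf a b c x y z p = x) ∨ (p = b ∧ wf a b c x y z p = y) ∨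
    (p = c ∧ wf a b c x y z p = z) ∨ (p ≠ a ∧ p ≠ b ∧ p ≠ c ∧ wf a b c x y z p = 0) := by
  by_cases h1 : p = a
  · subst h1; left; simp [wf, hab, hac]
  by_cases h2 : p = b
  · subst h2; right; left; simp [wf, hab.symm, hbc]
  by_cases h3 : p = c
  · subst h3; right; right; left; simp [wf, hac.symm, hbc.symm]
  · right; right; right; simp [wf, h1, h2, h3]

lemma wf_fst {a b c : Pt} (hab : a ≠ b) (hac : a ≠ c) (x y z : ℝ) : wf a b c x y z a = x := by
  simp [wf, hab, hac]
lemma wf_snd {a b c : Pt} (hab : a ≠ b) (hbc : b ≠ c) (x y z : ℝ) : wf a b c x y z b = y := by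
  simp [wf, hab.symm, hbc]
lemma wf_thd {a b c : Pt} (hbc : b ≠ c) (hac : a ≠ c) (x y z : ℝ) : wf a b c x y z c = z := by
  simp [wf, hac.symm, hbc.symm]

/-- Two weight functions with decreasingly ordered weights that agree have the same two largest
weights (one inequality). -/
lemma sorted_le {a b c a' b' c' : Pt} {x y z x' y' z' : ℝ}
    (hab : a ≠ b) (hbc : b ≠ c) (hac : a ≠ c) (hab' : a' ≠ b') (hbc' : b' ≠ c') (hac' : a' ≠ c')
    (hyz : z ≤ y) (hxy : y ≤ x) (hz' : 0 ≤ z') (hyz' : z' ≤ y') (hxy' : y' ≤ x')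
    (H : wf a b c x y z = wf a' b' c' x' y' z') : x ≤ x' ∧ y ≤ y' := by
  have Ha := wf_fst hab hac x y z
  have Hb := wf_snd hab hbc x y z
  rw [H] at Ha Hb
  have ca := wf_cases hab' hbc' hac' x' y' z' a
  have cb := wf_cases hab' hbc' hac' x' y' z' b
  rw [Ha] at ca; rw [Hb] at cb
  constructor
  · rcases ca with h | h | h | h
    · linarith [h.2]
    · linarith [h.2]
    · linarith [h.2]
    · linarith [h.2.2.2]
  · rcases cb with h | h | h | h
    · rcases ca with h' | h' | h' | h'
      · exact absurd (h'.1.trans h.1.symm) hab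
      · linarith [h'.2]
      · linarith [h'.2]
      · linarith [h'.2.2.2]
    · linarith [h.2]
    · linarith [h.2]
    · linarith [h.2.2.2]

/-- If two decreasingly weighted triples of points have the same weight function, the weights agree
and so do the vertices, as far as the weights separate them: these are exactly the data needed to
recover the vertex, edge midpoint and barycenter of a child. -/
lemma sorted_match {a b c a' b' c' : Pt} {x y z x' y' z' : ℝ}
    (hab : a ≠ b) (hbc : b ≠ c) (hac : a ≠ c) (hab' : a' ≠ b') (hbc' : b' ≠ c') (hac' : a' ≠ c')
    (hz : 0 ≤ z) (hyz : z ≤ y) (hxy : y ≤ x) (hz' : 0 ≤ z') (hyz' : z' ≤ y') (hxy' : y' ≤ x')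
    (hs : x + y + z = x' + y' + z')
    (H : wf a b c x y z = wf a' b' c' x' y' z') :
    x = x' ∧ y = y' ∧ z = z' ∧ (x ≠ y → a = a') ∧
      (y ≠ z → (a = a' ∧ b = b') ∨ (a = b' ∧ b = a')) ∧ (z ≠ 0 → a + b + c = a' + b' + c') := by
  obtain ⟨h1, h2⟩ := sorted_le hab hbc hac hab' hbc' hac' hyz hxy hz' hyz' hxy' H
  obtain ⟨h3, h4⟩ := sorted_le hab' hbc' hac' hab hbc hac hyz' hxy' hz hyz hxy H.symm
  obtain rfl : x = x' := le_antisymm h1 h3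
  obtain rfl : y = y' := le_antisymm h2 h4
  obtain rfl : z = z' := by linarith
  have Ha := wf_fst hab hac x y z
  have Hb := wf_snd hab hbc x y z
  have Hc := wf_thd hbc hac x y z
  rw [H] at Ha Hb Hc
  have ca := wf_cases hab' hbc' hac' x y z a
  have cb := wf_cases hab' hbc' hac' x y z b
  have cc := wf_cases hab' hbc' hac' x y z c
  rw [Ha] at ca; rw [Hb] at cb; rw [Hc] at cc
  refine ⟨rfl, rfl, rfl, fun hne => ?_, fun hne => ?_, fun hne => ?_⟩
  · have : y < x := lt_of_le_of_ne hxy hne.symm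
    rcases ca with h | h | h | h
    · exact h.1
    · linarith [h.2]
    · linarith [h.2]
    · linarith [h.2.2.2]
  · have : z < y := lt_of_le_of_ne hyz hne.symm
    have ca' : a = a' ∨ a = b' := by
      rcases ca with h | h | h | h
      · exact Or.inl h.1
      · exact Or.inr h.1
      · linarith [h.2]
      · linarith [h.2.2.2]
    have cb' : b = a' ∨ b = b' := by
      rcases cb with h | h | h | h
      · exact Or.inl h.1
      · exact Or.inr h.1
      · linarith [h.2]
      · linarith [h.2.2.2]
    rcases ca' with rfl | rfl <;> rcases cb' with rfl | rfl <;> simp_all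
  · have : 0 < z := lt_of_le_of_ne hz hne.symm
    have ca' : a = a' ∨ a = b' ∨ a = c' := by
      rcases ca with h | h | h | h
      · exact Or.inl h.1
      · exact Or.inr (Or.inl h.1)
      · exact Or.inr (Or.inr h.1)
      · linarith [h.2.2.2]
    have cb' : b = a' ∨ b = b' ∨ b = c' := by
      rcases cb with h | h | h | h
      · exact Or.inl h.1
      · exact Or.inr (Or.inl h.1)
      · exact Or.inr (Or.inr h.1)
      · linarith [h.2.2.2]
    have cc' : c = a' ∨ c = b' ∨ c = c' := by
      rcases cc with h | h | h | h
      · exact Or.inl h.1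
      · exact Or.inr (Or.inl h.1)
      · exact Or.inr (Or.inr h.1)
      · linarith [h.2.2.2]
    clear ca cb cc Ha Hb Hc H
    rcases ca' with rfl | rfl | rfl <;> rcases cb' with rfl | rfl | rfl <;>
      rcases cc' with rfl | rfl | rfl <;> first | (exfalso; tauto) | abel

/-- The barycentric weights of a point `p` of the hexagon at depth `0`, written as a function of `p`
alone; this shows that neighbouring sectors induce the same weights. -/
def W0 (p q : Pt) : ℝ :=
  (if q = cor 0 then max 0 (min p.1 (p.1 + p.2)) else 0) +
  (if q = cor 1 then max 0 (min p.2 (p.1 + p.2)) else 0) +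
  (if q = cor 2 then max 0 (min (-p.1) p.2) else 0) +
  (if q = cor 3 then max 0 (min (-p.1) (-p.1 - p.2)) else 0) +
  (if q = cor 4 then max 0 (min (-p.2) (-p.1 - p.2)) else 0) +
  (if q = cor 5 then max 0 (min p.1 (-p.2)) else 0) +
  (if q = 0 then 1 - max (max |p.1| |p.2|) |p.1 + p.2| else 0)

lemma W0_eq (i : ℕ) (hi : i < 6) (α β γ : ℝ) (hα : 0 ≤ α) (hβ : 0 ≤ β) (h : α + β + γ = 1) :
    W0 (α • cor i + β • cor (i + 1) + γ • (0 : Pt)) = wf (cor i) (cor (i + 1)) 0 α β γ := by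
  obtain rfl : γ = 1 - (α + β) := by linarith
  have h0 : 0 ≤ α + β := by linarith
  have h1 : -α ≤ β := by linarith
  have h2 : -β ≤ α := by linarith
  have h4 : |-α + -β| = α + β := by rw [abs_of_nonpos] <;> linarith
  funext q
  interval_cases i <;> simp [W0, wf, cor, abs_of_nonneg, hα, hβ, h0, h1, h2, h4, add_comm]

lemma if_mul_congr {α : ℝ} {p u u' : Pt} (h : α ≠ 0 → u = u') :
    (if p = u then α else 0) = (if p = u' then α else 0) := by
  by_cases ha : α = 0
  · simp [ha]
  · rw [h ha]

/-- The triangles of `T_{d+1}` form a geometric simplicial complex: a point has the same barycentric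
weights in all triangles containing it. For the induction step, the weights with respect to a child
determine ordered weights with respect to its parent. -/
theorem cons (d : ℕ) : ∀ {a b c a' b' c' : Pt} {x y z x' y' z' : ℝ}, Tri d a b c → Tri d a' b' c' →
    0 ≤ x → 0 ≤ y → 0 ≤ z → x + y + z = 1 → 0 ≤ x' → 0 ≤ y' → 0 ≤ z' → x' + y' + z' = 1 →
    x • a + y • b + z • c = x' • a' + y' • b' + z' • c' →
    wf a b c x y z = wf a' b' c' x' y' z' := by
  induction d with
  | zero =>
    intro a b c a' b' c' x y z x' y' z' h h' hx hy hz hs hx' hy' hz' hs' he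
    obtain ⟨i, hi, hr⟩ := h.inv_zero rfl
    obtain ⟨i', hi', hr'⟩ := h'.inv_zero rfl
    obtain ⟨α, β, γ, h1, h2, h3, h4, h5, h6⟩ := hr x y z hx hy hz hs
    obtain ⟨α', β', γ', h1', h2', h3', h4', h5', h6'⟩ := hr' x' y' z' hx' hy' hz' hs'
    rw [h6, h6', ← W0_eq i hi α β γ h1 h2 h4, ← W0_eq i' hi' α' β' γ' h1' h2' h4', ← h5, ← h5', he]
  | succ d ih =>
    intro a b c a' b' c' x y z x' y' z' h h' hx hy hz hs hx' hy' hz' hs' he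
    obtain ⟨u, v, w, ht, hr⟩ := h.inv_succ d rfl
    obtain ⟨u', v', w', ht', hr'⟩ := h'.inv_succ d rfl
    obtain ⟨α, β, γ, h1, h2, h3, h4, h5, h6⟩ := hr x y z hx hy hz hs
    obtain ⟨α', β', γ', h1', h2', h3', h4', h5', h6'⟩ := hr' x' y' z' hx' hy' hz' hs'
    have key : ∀ (u v w : Pt) (α β γ : ℝ), α • u + β • mpt u v + γ • bary u v w =
        (α + β / 2 + γ / 3) • u + (β / 2 + γ / 3) • v + (γ / 3) • w := by
      intro u v w α β γ
      simp only [mpt, bary]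
      module
    rw [h5, h5', key, key] at he
    have H := ih ht ht' (by positivity) (by positivity) (by positivity) (by linarith)
      (by positivity) (by positivity) (by positivity) (by linarith) he
    obtain ⟨e1, e2, e3, m1, m2, m3⟩ := sorted_match ht.ne12 ht.ne23 ht.ne13 ht'.ne12 ht'.ne23 ht'.ne13
      (by positivity) (by linarith) (by linarith) (by positivity) (by linarith) (by linarith)
      (by linarith) H
    obtain rfl : γ = γ' := by linarith
    obtain rfl : β = β' := by linarith
    obtain rfl : α = α' := by linarith
    rw [h6, h6']
    funext p
    unfold wf
    congr 1
    · congr 1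
      · refine if_mul_congr fun hne => m1 fun h => hne (by linarith)
      · refine if_mul_congr fun hne => ?_
        rcases m2 fun h => hne (by linarith) with ⟨h, h'⟩ | ⟨h, h'⟩
        · rw [h, h']
        · rw [h, h', mpt, mpt, add_comm]
    · refine if_mul_congr fun hne => ?_
      rw [bary, bary, m3 fun h => hne (by linarith)]

/-! ### Edges, conductances, energy and symmetries -/

/-- An edge has at most one triangle on each of its sides: two third vertices on the same side of
`p q` give overlapping triangles, and a point near the middle of `p q` contradicts `cons`. -/
lemma same_side {d p q r r'} (h : Tri d p q r) (h' : Tri d p q r')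
    (hA : 0 < area p q r * area p q r') : r = r' := by
  have hD := h.area_ne
  set D := area p q r with hDd
  set X := area p r' r / D with hX
  set Y := area p q r' / D with hY
  have hYpos : 0 < Y := by
    rw [hY]
    rcases lt_or_gt_of_ne hD with h1 | h1
    · exact div_pos_of_neg_of_neg (by nlinarith) h1
    · exact div_pos (by nlinarith) h1
  have e1 : r'.1 - p.1 = X * (q.1 - p.1) + Y * (r.1 - p.1) := by
    rw [hX, hY]; field_simp; rw [hDd]; simp only [area]; ring
  have e2 : r'.2 - p.2 = X * (q.2 - p.2) + Y * (r.2 - p.2) := by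
    rw [hX, hY]; field_simp; rw [hDd]; simp only [area]; ring
  clear_value X Y
  set ε : ℝ := 1 / (2 + 2 * |X| + 2 * |Y|) with hε
  have hd : 0 < 2 + 2 * |X| + 2 * |Y| := by positivity
  have hεp : 0 < ε := by positivity
  have hεm : ε * (2 + 2 * |X| + 2 * |Y|) = 1 := by rw [hε]; field_simp
  have b1 : ε * X ≤ ε * |X| := mul_le_mul_of_nonneg_left (le_abs_self X) hεp.le
  have b2 : -(ε * X) ≤ ε * |X| := by
    have := mul_le_mul_of_nonneg_left (neg_le_abs X) hεp.le; linarith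
  have b3 : ε * Y ≤ ε * |Y| := mul_le_mul_of_nonneg_left (le_abs_self Y) hεp.le
  have b4 : 0 ≤ ε * |X| := by positivity
  have b5 : 0 ≤ ε * |Y| := by positivity
  have key := cons d h' h (x := (1 - ε) / 2) (y := (1 - ε) / 2) (z := ε)
    (x' := (1 - ε) / 2 + ε * (1 - X - Y)) (y' := (1 - ε) / 2 + ε * X) (z' := ε * Y)
    (by nlinarith) (by nlinarith) hεp.le (by ring) (by nlinarith) (by nlinarith) (by positivity)
    (by ring) (by
      ext
      · simp; linear_combination ε * e1
      · simp; linear_combination ε * e2)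
  have k1 := congrFun key r'
  rw [wf_thd h'.ne23 h'.ne13] at k1
  rcases wf_cases h.ne12 h.ne23 h.ne13 ((1 - ε) / 2 + ε * (1 - X - Y)) ((1 - ε) / 2 + ε * X) (ε * Y) r'
    with ⟨h1, _⟩ | ⟨h1, _⟩ | ⟨h1, _⟩ | ⟨_, _, _, h1⟩
  · exact absurd h1.symm h'.ne13
  · exact absurd h1.symm h'.ne23
  · exact h1.symm
  · rw [h1] at k1; exact absurd k1 hεp.ne'

/-- An edge lies in at most two triangles. -/
lemma le_two {d p q r1 r2 r3} (h1 : Tri d p q r1) (h2 : Tri d p q r2) (h3 : Tri d p q r3) :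
    r1 = r2 ∨ r1 = r3 ∨ r2 = r3 := by
  rcases lt_or_gt_of_ne h1.area_ne with a1 | a1 <;> rcases lt_or_gt_of_ne h2.area_ne with a2 | a2 <;>
    rcases lt_or_gt_of_ne h3.area_ne with a3 | a3 <;>
  first
  | exact Or.inl (same_side h1 h2 (by nlinarith))
  | exact Or.inr (Or.inl (same_side h1 h3 (by nlinarith)))
  | exact Or.inr (Or.inr (same_side h2 h3 (by nlinarith)))

/-- A finite set of points containing all vertices of `T_{d+1}`. -/
def VS : ℕ → Set Pt
  | 0 => insert 0 (cor '' Set.Iio 7)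
  | d + 1 => VS d ∪ Set.image2 mpt (VS d) (VS d) ∪
      Set.image2 (fun p c => bary p.1 p.2 c) (VS d ×ˢ VS d) (VS d)

lemma VS_finite (d : ℕ) : (VS d).Finite := by
  induction d with
  | zero => exact ((Set.finite_Iio 7).image cor).insert 0
  | succ d ih => exact (ih.union (ih.image2 _ ih)).union ((ih.prod ih).image2 _ ih)

lemma Tri.mem_VS {d a b c} (h : Tri d a b c) : a ∈ VS d ∧ b ∈ VS d ∧ c ∈ VS d := by
  induction h with
  | base i hi =>
    exact ⟨Or.inr ⟨i, by simp; omega, rfl⟩, Or.inr ⟨i + 1, by simp; omega, rfl⟩, Or.inl rfl⟩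
  | @child d a b c _ ih =>
    obtain ⟨h1, h2, h3⟩ := ih
    exact ⟨Or.inl (Or.inl h1), Or.inl (Or.inr ⟨a, h1, b, h2, rfl⟩),
      Or.inr ⟨(a, b), ⟨h1, h2⟩, c, h3, rfl⟩⟩
  | swap _ ih => exact ⟨ih.2.1, ih.1, ih.2.2⟩
  | rot _ ih => exact ⟨ih.2.1, ih.2.2, ih.1⟩

/-- `p` and `q` are joined by an edge of `T_{d+1}`. -/
def Adj (d : ℕ) (p q : Pt) : Prop := ∃ r, Tri d p q r

open Classical in
/-- The conductances of `G_{d+1}^T` in linear coordinates: `2` on edges with a unique third vertex,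
`1` on the other edges. -/
def cc (d : ℕ) (p q : Pt) : ℝ :=
  if Adj d p q then (if ∃! r, Tri d p q r then 2 else 1) else 0

lemma cc_nonneg (d p q) : 0 ≤ cc d p q := by unfold cc; split_ifs <;> norm_num
lemma cc_zero {d p q} (h : ¬ Adj d p q) : cc d p q = 0 := if_neg h
lemma one_le_cc {d p q} (h : Adj d p q) : 1 ≤ cc d p q := by
  unfold cc; rw [if_pos h]; split_ifs <;> norm_num
lemma cc_ne {d p q} (h : cc d p q ≠ 0) : Adj d p q := by
  by_contra h'; exact h (cc_zero h')
lemma Adj.symm {d p q} (h : Adj d p q) : Adj d q p := h.imp fun _ h => h.swap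

/-- A finite set of ordered pairs containing all edges. -/
def PF (d : ℕ) : Finset (Pt × Pt) := (VS_finite d).toFinset ×ˢ (VS_finite d).toFinset

lemma Adj.mem_PF {d p q} (h : Adj d p q) : (p, q) ∈ PF d := by
  obtain ⟨r, h⟩ := h
  simp [PF, h.mem_VS.1, h.mem_VS.2.1]

/-- The energy on `G_{d+1}^T` in linear coordinates. -/
def En (d : ℕ) (f : Pt → ℝ) : ℝ := energy (cc d) f

/-- The energy as a finite sum. -/
lemma En_eq (d : ℕ) (f : Pt → ℝ) :
    En d f = (1 / 2) * ∑ e ∈ PF d, cc d e.1 e.2 * (f e.1 - f e.2) ^ 2 := by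
  unfold En energy PF
  rw [Finset.sum_product]
  congr 1
  have hz : ∀ p q, ¬ (p ∈ VS d ∧ q ∈ VS d) → cc d p q * (f p - f q) ^ 2 = 0 := by
    intro p q h
    rw [cc_zero, zero_mul]
    rintro ⟨r, hr⟩
    exact h ⟨hr.mem_VS.1, hr.mem_VS.2.1⟩
  rw [tsum_eq_sum (s := (VS_finite d).toFinset)]
  · refine Finset.sum_congr rfl fun p _ => ?_
    rw [tsum_eq_sum (s := (VS_finite d).toFinset)]
    intro q hq
    exact hz p q fun h => hq (by simpa using h.2)
  · intro p hp
    rw [tsum_congr (fun q => hz p q fun h => hp (by simpa using h.1)), tsum_zero]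

lemma En_nonneg (d f) : 0 ≤ En d f := by
  rw [En_eq]
  have : 0 ≤ ∑ e ∈ PF d, cc d e.1 e.2 * (f e.1 - f e.2) ^ 2 :=
    Finset.sum_nonneg fun e _ => mul_nonneg (cc_nonneg _ _ _) (sq_nonneg _)
  linarith

/-- A pointwise bound on squared increments along edges gives a bound on energies, for two functions
at a time. -/
lemma En_le2 {d : ℕ} {f1 f2 g1 g2 : Pt → ℝ} {a b : ℝ}
    (h : ∀ p q, Adj d p q → (f1 p - f1 q) ^ 2 + (f2 p - f2 q) ^ 2 ≤
      a * (g1 p - g1 q) ^ 2 + b * (g2 p - g2 q) ^ 2) :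
    En d f1 + En d f2 ≤ a * En d g1 + b * En d g2 := by
  simp only [En_eq]
  have : ∑ e ∈ PF d, cc d e.1 e.2 * (f1 e.1 - f1 e.2) ^ 2 +
      ∑ e ∈ PF d, cc d e.1 e.2 * (f2 e.1 - f2 e.2) ^ 2 ≤
      a * ∑ e ∈ PF d, cc d e.1 e.2 * (g1 e.1 - g1 e.2) ^ 2 +
      b * ∑ e ∈ PF d, cc d e.1 e.2 * (g2 e.1 - g2 e.2) ^ 2 := by
    rw [Finset.mul_sum, Finset.mul_sum, ← Finset.sum_add_distrib, ← Finset.sum_add_distrib]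
    refine Finset.sum_le_sum fun e _ => ?_
    by_cases he : Adj d e.1 e.2
    · nlinarith [mul_le_mul_of_nonneg_left (h _ _ he) (cc_nonneg d e.1 e.2)]
    · simp [cc_zero he]
  linarith

lemma En_const (d : ℕ) (c : ℝ) : En d (fun _ => c) = 0 := by simp [En_eq]

lemma En_mono {d : ℕ} {f g : Pt → ℝ}
    (h : ∀ p q, Adj d p q → (f p - f q) ^ 2 ≤ (g p - g q) ^ 2) : En d f ≤ En d g := by
  have := En_le2 (d := d) (f1 := f) (f2 := fun _ => 0) (g1 := g) (g2 := fun _ => 0) (a := 1) (b := 0)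
    (fun p q hpq => by have := h p q hpq; simp; linarith)
  simpa [En_const] using this

lemma En_avg (d : ℕ) (f g : Pt → ℝ) : En d (fun p => (f p + g p) / 2) ≤ (En d f + En d g) / 2 := by
  have := En_le2 (d := d) (f1 := fun p => (f p + g p) / 2) (f2 := fun _ => 0) (g1 := f) (g2 := g)
    (a := 1 / 2) (b := 1 / 2)
    (fun p q hpq => by nlinarith [sq_nonneg ((f p - f q) - (g p - g q))])
  rw [En_const] at this
  linarith

lemma En_one_sub (d : ℕ) (f : Pt → ℝ) : En d (fun p => 1 - f p) = En d f := by
  simp only [En_eq]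
  congr 1
  exact Finset.sum_congr rfl fun e _ => by ring

lemma sq_min_max (a b a' b' : ℝ) : (min a b - min a' b') ^ 2 + (max a b - max a' b') ^ 2 ≤
    (a - a') ^ 2 + (b - b') ^ 2 := by
  rcases le_total a b with h | h <;> rcases le_total a' b' with h' | h' <;>
    simp only [min_eq_left h, min_eq_right h, max_eq_left h, max_eq_right h, min_eq_left h',
      min_eq_right h', max_eq_left h', max_eq_right h'] <;> nlinarith [mul_nonneg (sub_nonneg.2 h) (sub_nonneg.2 h')]

/-- An involution of the plane preserving all the triangulations; see `sym_of`. -/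
structure Sym (g : Pt → Pt) : Prop where
  inv : Function.Involutive g
  tri : ∀ {d a b c}, Tri d a b c → Tri d (g a) (g b) (g c)

lemma Sym.tri_iff {g} (hg : Sym g) {d a b c} : Tri d (g a) (g b) (g c) ↔ Tri d a b c :=
  ⟨fun h => by simpa [hg.inv _] using hg.tri h, hg.tri⟩

lemma Sym.tri_iff' {g} (hg : Sym g) {d a b c} : Tri d (g a) (g b) c ↔ Tri d a b (g c) := by
  rw [← hg.tri_iff (a := a), hg.inv]

lemma Sym.cc {g} (hg : Sym g) (d p q) : cc d (g p) (g q) = cc d p q := by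
  have e1 : Adj d (g p) (g q) ↔ Adj d p q := by
    unfold Adj
    simp only [hg.tri_iff']
    exact (hg.inv.surjective.exists (p := fun r => Tri d p q r)).symm
  have e2 : (∃! r, Tri d (g p) (g q) r) ↔ ∃! r, Tri d p q r := by
    simp only [hg.tri_iff']
    exact (hg.inv.bijective.existsUnique_iff (p := fun r => Tri d p q r)).symm
  unfold BarycentricHexacarpet.cc
  have e1' := propext e1
  have e2' := propext e2
  congr! 2

lemma Sym.En {g} (hg : Sym g) (d : ℕ) (f : Pt → ℝ) : En d (fun p => f (g p)) = En d f := by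
  unfold BarycentricHexacarpet.En energy
  congr 1
  rw [← (hg.inv.toPerm g).tsum_eq]
  refine tsum_congr fun p => ?_
  rw [← (hg.inv.toPerm g).tsum_eq]
  refine tsum_congr fun q => ?_
  simp [hg.inv _, hg.cc]

/-- A linear involution that preserves the six sectors preserves every subdivision. -/
lemma sym_of {g : Pt → Pt} (hi : Function.Involutive g) (hl : IsLinearMap ℝ g)
    (hb : ∀ i < 6, Tri 0 (g (cor i)) (g (cor (i + 1))) 0) : Sym g := by
  refine ⟨hi, fun h => ?_⟩
  induction h with
  | base i hi => rw [hl.map_zero]; exact hb i hi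
  | child _ ih =>
    have := ih.child
    simpa only [mpt, bary, hl.map_smul, hl.map_add] using this
  | swap _ ih => exact ih.swap
  | rot _ ih => exact ih.rot

/-- The reflection fixing `cor 0` and `cor 3` and exchanging `cor 1` with `cor 5` and `cor 2` with
`cor 4`. -/
def rs (p : Pt) : Pt := (p.1 + p.2, -p.2)
/-- The reflection exchanging the sides `p.1 = -1` and `p.1 = 1`. -/
def rr (p : Pt) : Pt := (-p.1, p.1 + p.2)
/-- The reflection exchanging `cor 0` with `cor 4`, that is, the first and the last vertex of a
triangle mapped to by `th`. -/
def rt (p : Pt) : Pt := (-p.2, -p.1)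

lemma sym_rs : Sym rs := by
  refine sym_of (fun p => by simp [rs]) ⟨fun p q => by ext <;> simp [rs] <;> ring,
    fun c p => by ext <;> simp [rs]; ring⟩ fun i hi => ?_
  have := fun j hj => (Tri.base j hj).swap
  interval_cases i
  · simpa [rs, cor] using this 5
  · simpa [rs, cor] using this 4
  · simpa [rs, cor] using this 3
  · simpa [rs, cor] using this 2
  · simpa [rs, cor] using this 1
  · simpa [rs, cor] using this 0

lemma sym_rr : Sym rr := by
  refine sym_of (fun p => by simp [rr]) ⟨fun p q => by ext <;> simp [rr] <;> ring,
    fun c p => by ext <;> simp [rr]; ring⟩ fun i hi => ?_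
  have := fun j hj => (Tri.base j hj).swap
  interval_cases i
  · simpa [rr, cor] using this 1
  · simpa [rr, cor] using this 0
  · simpa [rr, cor] using this 5
  · simpa [rr, cor] using this 4
  · simpa [rr, cor] using this 3
  · simpa [rr, cor] using this 2

lemma sym_rt : Sym rt := by
  refine sym_of (fun p => by simp [rt]) ⟨fun p q => by ext <;> simp [rt] <;> ring,
    fun c p => by ext <;> simp [rt]⟩ fun i hi => ?_
  have := fun j hj => (Tri.base j hj).swap
  interval_cases i
  · simpa [rt, cor] using this 3
  · simpa [rt, cor] using this 2
  · simpa [rt, cor] using this 1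
  · simpa [rt, cor] using this 0
  · simpa [rt, cor] using this 5
  · simpa [rt, cor] using this 4

lemma sym_neg : Sym (fun p : Pt => -p) := by
  refine sym_of (fun p => by simp) ⟨fun p q => by ext <;> simp <;> ring,
    fun c p => by ext <;> simp⟩ fun i hi => ?_
  have := fun j hj => (Tri.base j hj)
  interval_cases i
  · simpa [cor] using this 3
  · simpa [cor] using this 4
  · simpa [cor] using this 5
  · simpa [cor] using this 0
  · simpa [cor] using this 1
  · simpa [cor] using this 2

/-! ### The piecewise linear maps from the hexagon to a triangle -/

/-- The piecewise linear formula behind the three barycentric coordinate functions `l0, l1, l2`. -/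
def lam (u v w : ℝ) : ℝ :=
  (1 - max u (max v w) + min u (min v w)) / 3 + (u - min u (min v w)) / 2 + max 0 (u - max v w) / 2

/-- First barycentric coordinate of the triangle obtained from the hexagon by pulling its corners
`0, 2, 4` to the vertices and its corners `1, 3, 5` to the midpoints of the edges: the function that
is linear on each sector and equals `lv0 i` at corner `i` and `1/3` at the center. -/
def l0 (p : Pt) : ℝ := lam (p.1 + p.2) p.2 0
/-- Second barycentric coordinate, with the values `lv1 i` at the corners. -/
def l1 (p : Pt) : ℝ := lam p.2 (p.1 + p.2) 0
/-- Third barycentric coordinate, with the values `lv2 i` at the corners. -/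
def l2 (p : Pt) : ℝ := lam 0 (p.1 + p.2) p.2

lemma lam_cases (u v w : ℝ) :
    (u ≤ v ∧ v ≤ w ∧ lam u v w = (1 - w + u) / 3) ∨ (u ≤ w ∧ w ≤ v ∧ lam u v w = (1 - v + u) / 3) ∨
    (v ≤ u ∧ u ≤ w ∧ lam u v w = (1 - w + v) / 3 + (u - v) / 2) ∨
    (w ≤ u ∧ u ≤ v ∧ lam u v w = (1 - v + w) / 3 + (u - w) / 2) ∨
    (v ≤ w ∧ w ≤ u ∧ lam u v w = (1 - u + v) / 3 + (u - v) / 2 + (u - w) / 2) ∨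
    (w ≤ v ∧ v ≤ u ∧ lam u v w = (1 - u + w) / 3 + (u - w) / 2 + (u - v) / 2) := by
  have k : ∀ M m x : ℝ, max u (max v w) = M → min u (min v w) = m → max 0 (u - max v w) = x →
    lam u v w = (1 - M + m) / 3 + (u - m) / 2 + x / 2 := by rintro _ _ _ rfl rfl rfl; rfl
  rcases le_total v w with h | h
  · have e1 : max v w = w := max_eq_right h
    have e2 : min v w = v := min_eq_left h
    rcases le_total u v with h1 | h1
    · left; refine ⟨h1, h, ?_⟩
      rw [k w u 0] <;> (try simp only [e1, e2])
      · ring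
      · exact max_eq_right (h1.trans h)
      · exact min_eq_left h1
      · exact max_eq_left (by linarith)
    rcases le_total u w with h2 | h2
    · right; right; left; refine ⟨h1, h2, ?_⟩
      rw [k w v 0] <;> (try simp only [e1, e2])
      · ring
      · exact max_eq_right h2
      · exact min_eq_right h1
      · exact max_eq_left (by linarith)
    · right; right; right; right; left; refine ⟨h, h2, ?_⟩
      rw [k u v (u - w)] <;> (try simp only [e1, e2])
      · exact max_eq_left h2
      · exact min_eq_right h1
      · exact max_eq_right (by linarith)
  · have e1 : max v w = v := max_eq_left h
    have e2 : min v w = w := min_eq_right h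
    rcases le_total u w with h1 | h1
    · right; left; refine ⟨h1, h, ?_⟩
      rw [k v u 0] <;> (try simp only [e1, e2])
      · ring
      · exact max_eq_right (h1.trans h)
      · exact min_eq_left h1
      · exact max_eq_left (by linarith)
    rcases le_total u v with h2 | h2
    · right; right; right; left; refine ⟨h1, h2, ?_⟩
      rw [k v w 0] <;> (try simp only [e1, e2])
      · ring
      · exact max_eq_right h2
      · exact min_eq_right h1
      · exact max_eq_left (by linarith)
    · right; right; right; right; right; refine ⟨h, h2, ?_⟩
      rw [k u w (u - v)] <;> (try simp only [e1, e2])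
      · exact max_eq_left h2
      · exact min_eq_right h1
      · exact max_eq_right (by linarith)

/-- Values of `l0` at the corners. -/
def lv0 : ℕ → ℝ
  | 0 => 1 | 1 => 1/2 | 2 => 0 | 3 => 0 | 4 => 0 | 5 => 1/2 | _ => 1
/-- Values of `l1` at the corners. -/
def lv1 : ℕ → ℝ
  | 0 => 0 | 1 => 1/2 | 2 => 1 | 3 => 1/2 | 4 => 0 | 5 => 0 | _ => 0
/-- Values of `l2` at the corners. -/
def lv2 : ℕ → ℝ
  | 0 => 0 | 1 => 0 | 2 => 0 | 3 => 1/2 | 4 => 1 | 5 => 1/2 | _ => 0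

/-- On each sector `l0` is the linear interpolation of its values at the corners and the center. -/
lemma l0_sec {i y} (hi : i < 6) (h : Sec i y) :
    l0 y = (1 - al i y - be i y) / 3 + al i y * lv0 i + be i y * lv0 (i + 1) := by
  obtain ⟨h1, h2, h3⟩ := h
  rcases lam_cases (y.1 + y.2) y.2 0 with h | h | h | h | h | h <;> rw [l0, h.2.2] <;>
  interval_cases i <;> simp [al, be, cor, lv0] at * <;> linarith

lemma l1_sec {i y} (hi : i < 6) (h : Sec i y) :
    l1 y = (1 - al i y - be i y) / 3 + al i y * lv1 i + be i y * lv1 (i + 1) := by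
  obtain ⟨h1, h2, h3⟩ := h
  rcases lam_cases y.2 (y.1 + y.2) 0 with h | h | h | h | h | h <;> rw [l1, h.2.2] <;>
  interval_cases i <;> simp [al, be, cor, lv1] at * <;> linarith

lemma l2_sec {i y} (hi : i < 6) (h : Sec i y) :
    l2 y = (1 - al i y - be i y) / 3 + al i y * lv2 i + be i y * lv2 (i + 1) := by
  obtain ⟨h1, h2, h3⟩ := h
  rcases lam_cases 0 (y.1 + y.2) y.2 with h | h | h | h | h | h <;> rw [l2, h.2.2] <;>
  interval_cases i <;> simp [al, be, cor, lv2] at * <;> linarith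

/-- The closed hexagon, as the union of its sectors. -/
def Hex (y : Pt) : Prop := ∃ i < 6, Sec i y

lemma Tri.hex {d a b c} (h : Tri d a b c) : Hex a ∧ Hex b ∧ Hex c := by
  obtain ⟨i, hi, h1, h2, h3⟩ := h.sec
  exact ⟨⟨i, hi, h1⟩, ⟨i, hi, h2⟩, ⟨i, hi, h3⟩⟩

lemma Hex.nonneg {y} (h : Hex y) : 0 ≤ l0 y ∧ 0 ≤ l1 y ∧ 0 ≤ l2 y := by
  obtain ⟨i, hi, h⟩ := h
  rw [l0_sec hi h, l1_sec hi h, l2_sec hi h]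
  obtain ⟨h1, h2, h3⟩ := h
  have h4 : 0 ≤ (1 - al i y - be i y) / 3 := by linarith
  interval_cases i <;> simp [lv0, lv1, lv2] <;> refine ⟨?_, ?_, ?_⟩ <;> linarith

lemma Hex.sum {y} (h : Hex y) : l0 y + l1 y + l2 y = 1 := by
  obtain ⟨i, hi, h⟩ := h
  rw [l0_sec hi h, l1_sec hi h, l2_sec hi h]
  interval_cases i <;> simp [lv0, lv1, lv2] <;> linarith

/-- Recovers the hexagon coordinates from the barycentric ones, see `Hex.inv_fst` and `Hex.inv_snd`. -/
def kap (u v w : ℝ) : ℝ := 2 * u - max 0 (u - max v w)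

lemma kap_cases (u v w : ℝ) : (v ≤ u ∧ w ≤ v ∧ kap u v w = u + v) ∨ (w ≤ u ∧ v ≤ w ∧ kap u v w = u + w) ∨
    (u ≤ v ∧ w ≤ v ∧ kap u v w = 2 * u) ∨ (u ≤ w ∧ v ≤ w ∧ kap u v w = 2 * u) := by
  unfold kap
  rcases le_total v w with h | h
  · rw [max_eq_right h]
    rcases le_total u w with h1 | h1
    · rw [max_eq_left (by linarith)]; simp [h, h1]
    · rw [max_eq_right (by linarith)]; right; left; refine ⟨h1, h, by ring⟩
  · rw [max_eq_left h]
    rcases le_total u v with h1 | h1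
    · rw [max_eq_left (by linarith)]; simp [h, h1]
    · rw [max_eq_right (by linarith)]; left; refine ⟨h1, h, by ring⟩

lemma Hex.inv_fst {y} (h : Hex y) :
    y.1 = kap (l0 y) (l1 y) (l2 y) - kap (l1 y) (l0 y) (l2 y) := by
  obtain ⟨i, hi, h⟩ := h
  have e0 := l0_sec hi h
  have e1 := l1_sec hi h
  have e2 := l2_sec hi h
  obtain ⟨h1, h2, h3⟩ := h
  generalize l0 y = u at *
  generalize l1 y = v at *
  generalize l2 y = w at *
  interval_cases i <;> simp [al, be, cor, lv0, lv1, lv2] at * <;>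
  rcases kap_cases u v w with k | k | k | k <;> rcases kap_cases v u w with k' | k' | k' | k' <;>
    rw [k.2.2, k'.2.2] <;> linarith

lemma Hex.inv_snd {y} (h : Hex y) :
    y.2 = kap (l1 y) (l0 y) (l2 y) - kap (l2 y) (l0 y) (l1 y) := by
  obtain ⟨i, hi, h⟩ := h
  have e0 := l0_sec hi h
  have e1 := l1_sec hi h
  have e2 := l2_sec hi h
  obtain ⟨h1, h2, h3⟩ := h
  generalize l0 y = u at *
  generalize l1 y = v at *
  generalize l2 y = w at *
  interval_cases i <;> simp [al, be, cor, lv0, lv1, lv2] at * <;>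
  rcases kap_cases v u w with k | k | k | k <;> rcases kap_cases w u v with k' | k' | k' | k' <;>
    rw [k.2.2, k'.2.2] <;> linarith

/-- The piecewise linear map from the hexagon onto the triangle `a b c`, sending the hexagon `T_1` to
the barycentric subdivision of `a b c`. -/
def th (a b c y : Pt) : Pt := l0 y • a + l1 y • b + l2 y • c

lemma lam_inj {y y'} (h : Hex y) (h' : Hex y') (e0 : l0 y = l0 y') (e1 : l1 y = l1 y')
    (e2 : l2 y = l2 y') : y = y' := by
  ext
  · rw [h.inv_fst, h'.inv_fst, e0, e1, e2]
  · rw [h.inv_snd, h'.inv_snd, e0, e1, e2]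

lemma th_inj {d a b c y y'} (ht : Tri d a b c) (h : Hex y) (h' : Hex y')
    (e : th a b c y = th a b c y') : y = y' := by
  have e1 := congrArg Prod.fst e
  have e2 := congrArg Prod.snd e
  simp only [th, Prod.fst_add, Prod.snd_add, Prod.smul_fst, Prod.smul_snd, smul_eq_mul] at e1 e2
  have s := h.sum
  have s' := h'.sum
  have hA := ht.area_ne
  have k0 : l0 y = l0 y' - (l1 y - l1 y') - (l2 y - l2 y') := by linarith
  have k1 : area a b c * (l1 y - l1 y') = 0 := by
    rw [k0] at e1 e2
    unfold area
    linear_combination (c.2 - a.2) * e1 - (c.1 - a.1) * e2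
  have k2 : area a b c * (l2 y - l2 y') = 0 := by
    rw [k0] at e1 e2
    unfold area
    linear_combination (b.1 - a.1) * e2 - (b.2 - a.2) * e1
  have k1' := (mul_eq_zero.1 k1).resolve_left hA
  have k2' := (mul_eq_zero.1 k2).resolve_left hA
  exact lam_inj h h' (by linarith) (by linarith) (by linarith)

lemma th_mpt {i y y' a b c} (hi : i < 6) (h : Sec i y) (h' : Sec i y') :
    th a b c (mpt y y') = mpt (th a b c y) (th a b c y') := by
  unfold th
  rw [l0_sec hi (h.mpt h'), l1_sec hi (h.mpt h'), l2_sec hi (h.mpt h'), l0_sec hi h, l1_sec hi h,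
    l2_sec hi h, l0_sec hi h', l1_sec hi h', l2_sec hi h', al_mpt, be_mpt, mpt]
  module

lemma th_bary {i y y' y'' a b c} (hi : i < 6) (h : Sec i y) (h' : Sec i y') (h'' : Sec i y'') :
    th a b c (bary y y' y'') = bary (th a b c y) (th a b c y') (th a b c y'') := by
  unfold th
  rw [l0_sec hi (h.bary h' h''), l1_sec hi (h.bary h' h''), l2_sec hi (h.bary h' h''),
    l0_sec hi h, l1_sec hi h, l2_sec hi h, l0_sec hi h', l1_sec hi h', l2_sec hi h',
    l0_sec hi h'', l1_sec hi h'', l2_sec hi h'', al_bary, be_bary, bary]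
  module

lemma l0_cor {i} (hi : i < 7) : l0 (cor i) = lv0 i := by
  rcases Nat.lt_or_ge i 6 with h | h
  · rw [l0_sec h]
    · interval_cases i <;> simp [al, be, cor, lv0]
    · interval_cases i <;> simp [Sec, al, be, cor]
  · obtain rfl : i = 6 := by omega
    rw [l0_sec (i := 0) (by norm_num)]
    · simp [al, be, cor, lv0]
    · simp [Sec, al, be, cor]
lemma l1_cor {i} (hi : i < 7) : l1 (cor i) = lv1 i := by
  rcases Nat.lt_or_ge i 6 with h | h
  · rw [l1_sec h]
    · interval_cases i <;> simp [al, be, cor, lv1]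
    · interval_cases i <;> simp [Sec, al, be, cor]
  · obtain rfl : i = 6 := by omega
    rw [l1_sec (i := 0) (by norm_num)]
    · simp [al, be, cor, lv1]
    · simp [Sec, al, be, cor]
lemma l2_cor {i} (hi : i < 7) : l2 (cor i) = lv2 i := by
  rcases Nat.lt_or_ge i 6 with h | h
  · rw [l2_sec h]
    · interval_cases i <;> simp [al, be, cor, lv2]
    · interval_cases i <;> simp [Sec, al, be, cor]
  · obtain rfl : i = 6 := by omega
    rw [l2_sec (i := 0) (by norm_num)]
    · simp [al, be, cor, lv2]
    · simp [Sec, al, be, cor]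

lemma th_cor {i a b c} (hi : i < 7) : th a b c (cor i) = lv0 i • a + lv1 i • b + lv2 i • c := by
  rw [th, l0_cor hi, l1_cor hi, l2_cor hi]

lemma th_zero (a b c) : th a b c 0 = bary a b c := by
  have : Sec 0 0 := by simp [Sec, al, be]
  rw [th, l0_sec (by norm_num) this, l1_sec (by norm_num) this, l2_sec (by norm_num) this, bary]
  simp [al, be]

lemma th_c0 (a b c) : th a b c (cor 0) = a := by rw [th_cor (by norm_num)]; simp [lv0, lv1, lv2]
lemma th_c1 (a b c) : th a b c (cor 1) = mpt a b := by
  rw [th_cor (by norm_num)]; simp [lv0, lv1, lv2, mpt]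
lemma th_c2 (a b c) : th a b c (cor 2) = b := by rw [th_cor (by norm_num)]; simp [lv0, lv1, lv2]
lemma th_c3 (a b c) : th a b c (cor 3) = mpt b c := by
  rw [th_cor (by norm_num)]; simp [lv0, lv1, lv2, mpt]
lemma th_c4 (a b c) : th a b c (cor 4) = c := by rw [th_cor (by norm_num)]; simp [lv0, lv1, lv2]
lemma th_c5 (a b c) : th a b c (cor 5) = mpt a c := by
  rw [th_cor (by norm_num)]; simp [lv0, lv1, lv2, mpt]
lemma th_c6 (a b c) : th a b c (cor 6) = a := by rw [th_cor (by norm_num)]; simp [lv0, lv1, lv2]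

lemma mpt_comm (a b) : mpt a b = mpt b a := by simp [mpt, add_comm]

lemma bary_eq {a b c a' b' c' : Pt} (h : a + b + c = a' + b' + c') : bary a b c = bary a' b' c' := by
  rw [bary, bary, h]

/-- `th` over a triangle of `T_{d+1}` carries `T_{e+1}` into `T_{d+e+2}`. -/
lemma Tri.comp {d a b c} (h : Tri d a b c) {e y1 y2 y3} (h' : Tri e y1 y2 y3) :
    Tri (d + e + 1) (th a b c y1) (th a b c y2) (th a b c y3) := by
  induction h' with
  | base i hi =>
    rw [th_zero]
    interval_cases i <;> norm_num only <;>
      simp only [th_c0, th_c1, th_c2, th_c3, th_c4, th_c5, th_c6]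
    · exact h.child
    · convert h.swap.child.swap using 1
      · exact mpt_comm _ _
      · exact bary_eq (by abel)
    · convert h.rot.child using 1
      exact bary_eq (by abel)
    · convert h.rot.swap.child.swap using 1
      · exact mpt_comm _ _
      · exact bary_eq (by abel)
    · convert h.rot.rot.child using 1
      · exact mpt_comm _ _
      · exact bary_eq (by abel)
    · convert h.rot.rot.swap.child.swap using 1
      exact bary_eq (by abel)
  | child h' ih =>
    obtain ⟨i, hi, h1, h2, h3⟩ := h'.sec
    rw [th_mpt hi h1 h2, th_bary hi h1 h2 h3]
    exact ih.child
  | swap _ ih => exact ih.swap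
  | rot _ ih => exact ih.rot

/-- A triangle whose vertices are listed in decreasing order of `κ`. -/
def Srt {L : Type} [LinearOrder L] (κ : Pt → L) (d : ℕ) (a b c : Pt) : Prop :=
  Tri d a b c ∧ κ b < κ a ∧ κ c < κ b

lemma exists_srt {L : Type} [LinearOrder L] {κ : Pt → L} (hκ : Function.Injective κ) {d a b c}
    (h : Tri d a b c) : Srt κ d a b c ∨ Srt κ d a c b ∨ Srt κ d b a c ∨ Srt κ d b c a ∨
      Srt κ d c a b ∨ Srt κ d c b a := by
  have h1 := hκ.ne h.ne12
  have h2 := hκ.ne h.ne23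
  have h3 := hκ.ne h.ne13
  have := h.swap
  have := h.rot
  have := h.rot.rot
  have := h.rot.swap
  have := h.rot.rot.swap
  unfold Srt
  rcases lt_or_gt_of_ne h1 with h1 | h1 <;> rcases lt_or_gt_of_ne h2 with h2 | h2 <;>
    rcases lt_or_gt_of_ne h3 with h3 | h3 <;> tauto

/-- Every triangle of `T_{d+e+2}` is the image of a triangle of `T_{e+1}` under `th` over a triangle
of `T_{d+1}` whose vertices are sorted by `κ`. -/
lemma Tri.decomp {L : Type} [LinearOrder L] {κ : Pt → L} (hκ : Function.Injective κ) {d k p q r}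
    (h : Tri k p q r) : ∀ e, k = d + e + 1 → ∃ a b c y1 y2 y3, Srt κ d a b c ∧ Tri e y1 y2 y3 ∧
      p = th a b c y1 ∧ q = th a b c y2 ∧ r = th a b c y3 := by
  induction h with
  | base i hi => intro e he; omega
  | @child k p q r h ih =>
    intro e he
    rcases e with _ | e
    · obtain rfl : k = d := by omega
      rcases exists_srt hκ h with s | s | s | s | s | s
      · exact ⟨_, _, _, cor 0, cor 1, 0, s, Tri.base 0 (by norm_num), (th_c0 _ _ _).symm,
          (th_c1 _ _ _).symm, (th_zero _ _ _).symm⟩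
      · exact ⟨_, _, _, cor 6, cor 5, 0, s, (Tri.base 5 (by norm_num)).swap, (th_c6 _ _ _).symm,
          (th_c5 _ _ _).symm, (bary_eq (by abel)).trans (th_zero _ _ _).symm⟩
      · exact ⟨_, _, _, cor 2, cor 1, 0, s, (Tri.base 1 (by norm_num)).swap, (th_c2 _ _ _).symm,
          (mpt_comm _ _).trans (th_c1 _ _ _).symm, (bary_eq (by abel)).trans (th_zero _ _ _).symm⟩
      · exact ⟨_, _, _, cor 4, cor 5, 0, s, (Tri.base 4 (by norm_num)), (th_c4 _ _ _).symm,
          (mpt_comm _ _).trans (th_c5 _ _ _).symm, (bary_eq (by abel)).trans (th_zero _ _ _).symm⟩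
      · exact ⟨_, _, _, cor 2, cor 3, 0, s, (Tri.base 2 (by norm_num)), (th_c2 _ _ _).symm,
          (th_c3 _ _ _).symm, (bary_eq (by abel)).trans (th_zero _ _ _).symm⟩
      · exact ⟨_, _, _, cor 4, cor 3, 0, s, (Tri.base 3 (by norm_num)).swap, (th_c4 _ _ _).symm,
          (mpt_comm _ _).trans (th_c3 _ _ _).symm, (bary_eq (by abel)).trans (th_zero _ _ _).symm⟩
    · obtain ⟨a, b, c, y1, y2, y3, s, ht, rfl, rfl, rfl⟩ := ih e (by omega)
      obtain ⟨i, hi, h1, h2, h3⟩ := ht.sec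
      exact ⟨a, b, c, _, _, _, s, ht.child, rfl, (th_mpt hi h1 h2).symm, (th_bary hi h1 h2 h3).symm⟩
  | swap _ ih =>
    intro e he
    obtain ⟨a, b, c, y1, y2, y3, s, ht, h1, h2, h3⟩ := ih e he
    exact ⟨a, b, c, _, _, _, s, ht.swap, h2, h1, h3⟩
  | rot _ ih =>
    intro e he
    obtain ⟨a, b, c, y1, y2, y3, s, ht, h1, h2, h3⟩ := ih e he
    exact ⟨a, b, c, _, _, _, s, ht.rot, h2, h3, h1⟩

/-! ### Symmetrized potentials -/

/-- `p` is a vertex of `T_{d+1}`. -/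
def Vtx (d : ℕ) (p : Pt) : Prop := ∃ q r, Tri d p q r

lemma Adj.vtx {d p q} (h : Adj d p q) : Vtx d p := ⟨q, h⟩

/-- `f` is admissible in the definition of the resistance: in linear coordinates the two opposite
sides of the hexagon are `p.1 = -1` and `p.1 = 1`. -/
def Adm (d : ℕ) (f : Pt → ℝ) : Prop :=
  (∀ p, Vtx d p → p.1 = -1 → f p = 0) ∧ (∀ p, Vtx d p → p.1 = 1 → f p = 1)

/-- No edge crosses the line `p.1 = 0`. -/
lemma Adj.side {d p q} (h : Adj d p q) : (0 ≤ p.1 ∧ 0 ≤ q.1) ∨ (p.1 ≤ 0 ∧ q.1 ≤ 0) := by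
  obtain ⟨r, h⟩ := h
  obtain ⟨i, hi, ⟨h1, h2, h3⟩, ⟨h4, h5, h6⟩, -⟩ := h.sec
  interval_cases i <;> simp [al, be, cor] at * <;>
    first
    | (left; constructor <;> linarith)
    | (right; constructor <;> linarith)

/-- The map `k ↦ min (1/2) |k - 1/2|` is `1`-Lipschitz. -/
lemma abs_min_sub (k k' : ℝ) :
    (min (1 / 2) |k - 1 / 2| - min (1 / 2) |k' - 1 / 2|) ^ 2 ≤ (k - k') ^ 2 := by
  refine sq_le_sq.2 ?_
  have h1 := abs_min_sub_min_le_max (1 / 2 : ℝ) |k - 1 / 2| (1 / 2) |k' - 1 / 2|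
  have h2 := abs_abs_sub_abs_le (k - 1 / 2) (k' - 1 / 2)
  rw [sub_self, abs_zero, max_eq_right (abs_nonneg _)] at h1
  have : k - 1 / 2 - (k' - 1 / 2) = k - k' := by ring
  rw [this] at h2
  exact h1.trans h2

/-- Without increasing its energy, an admissible function can be made antisymmetric under `rr` and
`-1`, with values in `[0, 1]`, and on the correct side of `1/2` on each half of the hexagon.
Antisymmetry comes from averaging; the last property from reflecting at the level `1/2`, which is
attained on the whole line `p.1 = 0`. -/
lemma exists_sym {d : ℕ} {h : Pt → ℝ} (hA : Adm d h) : ∃ g : Pt → ℝ, En d g ≤ En d h ∧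
    (∀ p, g (rr p) = 1 - g p) ∧ (∀ p, g (-p) = 1 - g p) ∧ (∀ p, 0 ≤ g p ∧ g p ≤ 1) ∧
    (∀ p, 0 ≤ p.1 → 1 / 2 ≤ g p) ∧ (∀ p, p.1 ≤ 0 → g p ≤ 1 / 2) ∧
    (∀ p, p.1 = -1 → g p = 0) ∧ (∀ p, p.1 = 1 → g p = 1) := by
  classical
  set f0 : Pt → ℝ := fun p => if p.1 = -1 then 0 else if p.1 = 1 then 1 else h p with hf0
  have f0v : ∀ p, Vtx d p → f0 p = h p := by
    intro p hp
    simp only [hf0]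
    split_ifs with h1 h2
    · rw [hA.1 p hp h1]
    · rw [hA.2 p hp h2]
    · rfl
  have E0 : En d f0 ≤ En d h := En_mono fun p q hpq => by rw [f0v p hpq.vtx, f0v q hpq.symm.vtx]
  have b0 : ∀ p, p.1 = -1 → f0 p = 0 := fun p hp => by simp [hf0, hp]
  have b1 : ∀ p, p.1 = 1 → f0 p = 1 := fun p hp => by simp [hf0, hp]; norm_num
  clear_value f0
  set g : Pt → ℝ := fun p => (f0 p + (1 - f0 (-p))) / 2 with hg
  have E1 : En d g ≤ En d h := by
    have := En_avg d f0 (fun p => 1 - f0 (-p))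
    rw [En_one_sub d (fun p => f0 (-p)), sym_neg.En] at this
    linarith
  have g1 : ∀ p, g (-p) = 1 - g p := fun p => by simp only [hg, neg_neg]; ring
  have g2 : ∀ p, p.1 = -1 → g p = 0 := fun p hp => by
    simp only [hg]; rw [b0 p hp, b1 (-p) (by simp [hp])]; norm_num
  have g3 : ∀ p, p.1 = 1 → g p = 1 := fun p hp => by
    simp only [hg]; rw [b1 p hp, b0 (-p) (by simp [hp])]; norm_num
  clear_value g
  set k : Pt → ℝ := fun p => (g p + (1 - g (rr p))) / 2 with hk
  have E2 : En d k ≤ En d h := by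
    have := En_avg d g (fun p => 1 - g (rr p))
    rw [En_one_sub d (fun p => g (rr p)), sym_rr.En] at this
    linarith
  have k1 : ∀ p, k (-p) = 1 - k p := fun p => by
    have : rr (-p) = -rr p := by ext <;> simp [rr]; ring
    simp only [hk]; rw [this, g1, g1]; ring
  have k0 : ∀ p, k (rr p) = 1 - k p := fun p => by
    simp only [hk]; rw [sym_rr.inv p]; ring
  have k2 : ∀ p, p.1 = -1 → k p = 0 := fun p hp => by
    simp only [hk]; rw [g2 p hp, g3 (rr p) (by simp [rr, hp])]; norm_num
  have k3 : ∀ p, p.1 = 1 → k p = 1 := fun p hp => by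
    simp only [hk]; rw [g3 p hp, g2 (rr p) (by simp [rr, hp])]; norm_num
  have k4 : ∀ p : Pt, p.1 = 0 → k p = 1 / 2 := fun p hp => by
    have h1 : rr p = p := by ext <;> simp [rr, hp]
    have := k0 p
    rw [h1] at this; linarith
  clear_value k
  set m : Pt → ℝ := fun p => min (1 / 2) |k p - 1 / 2| with hm
  have m0 : ∀ p, 0 ≤ m p := fun p => le_min (by norm_num) (abs_nonneg _)
  have m1 : ∀ p, m p ≤ 1 / 2 := fun p => min_le_left _ _
  have m2 : ∀ p, m (-p) = m p := fun p => by
    simp only [hm, k1]; rw [← abs_neg]; congr 2; ring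
  have m3 : ∀ p, m (rr p) = m p := fun p => by
    simp only [hm, k0]; rw [← abs_neg]; congr 2; ring
  have m4 : ∀ p : Pt, p.1 = 0 → m p = 0 := fun p hp => by simp only [hm]; rw [k4 p hp]; norm_num
  have m5 : ∀ p : Pt, p.1 = 1 → m p = 1 / 2 := fun p hp => by
    simp only [hm]; rw [k3 p hp]; norm_num [abs_of_pos]
  have m6 : ∀ p : Pt, p.1 = -1 → m p = 1 / 2 := fun p hp => by
    simp only [hm]; rw [k2 p hp]; norm_num [abs_of_pos]
  have m7 : ∀ p q, (m p - m q) ^ 2 ≤ (k p - k q) ^ 2 := fun p q => abs_min_sub _ _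
  clear_value m
  set r : Pt → ℝ := fun p => if 0 ≤ p.1 then 1 / 2 + m p else 1 / 2 - m p with hr
  have r1 : ∀ p : Pt, 0 ≤ p.1 → r p = 1 / 2 + m p := fun p hp => by simp only [hr]; rw [if_pos hp]
  have r2 : ∀ p : Pt, p.1 ≤ 0 → r p = 1 / 2 - m p := fun p hp => by
    simp only [hr]
    split_ifs with h1
    · rw [m4 p (le_antisymm hp h1)]; ring
    · rfl
  clear_value r
  have flip : ∀ p q : Pt, q.1 = -p.1 → m q = m p → r q = 1 - r p := by
    intro p q h1 h2
    rcases le_total 0 p.1 with h | h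
    · rw [r1 p h, r2 q (by linarith), h2]; ring
    · rw [r2 p h, r1 q (by linarith), h2]; ring
  refine ⟨r, (En_mono fun p q hpq => ?_).trans E2, fun p => flip _ _ rfl (m3 p),
    fun p => flip _ _ rfl (m2 p), fun p => ?_, fun p hp => ?_, fun p hp => ?_, fun p hp => ?_,
    fun p hp => ?_⟩
  · rcases hpq.side with ⟨h1, h2⟩ | ⟨h1, h2⟩
    · rw [r1 p h1, r1 q h2]; have := m7 p q; ring_nf at this ⊢; exact this
    · rw [r2 p h1, r2 q h2]; have := m7 p q; ring_nf at this ⊢; exact this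
  · rcases le_total 0 p.1 with h | h
    · rw [r1 p h]; constructor <;> linarith [m0 p, m1 p]
    · rw [r2 p h]; constructor <;> linarith [m0 p, m1 p]
  · rw [r1 p hp]; linarith [m0 p]
  · rw [r2 p hp]; linarith [m0 p]
  · rw [r2 p (by linarith), m6 p hp]; norm_num
  · rw [r1 p (by linarith), m5 p hp]; norm_num

lemma lam_swap (u v w : ℝ) : lam u v w = lam u w v := by
  unfold lam; rw [max_comm v w, min_comm v w]

/-- `lam` depends only on the differences of its arguments. -/
lemma lam_shift (u v w x : ℝ) : lam (u + x) (v + x) (w + x) = lam u v w := by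
  unfold lam
  rw [max_add_add_right, max_add_add_right, min_add_add_right, min_add_add_right]
  have : u + x - (max v w + x) = u - max v w := by ring
  rw [this]; ring

lemma l0_rt (y) : l0 (rt y) = l2 y := by
  rw [l0, l2, lam_swap, ← lam_shift _ _ _ (y.1 + y.2)]
  simp only [rt]; congr 1 <;> ring
lemma l2_rt (y) : l2 (rt y) = l0 y := by rw [← l0_rt, sym_rt.inv]
lemma l1_rt (y) : l1 (rt y) = l1 y := by
  rw [l1, l1, lam_swap, ← lam_shift _ _ _ (y.1 + y.2)]
  simp only [rt]; congr 1 <;> ring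

lemma Hex.rt {y} (h : Hex y) : Hex (rt y) := by
  obtain ⟨i, hi, h1, h2, h3⟩ := h
  have := fun (j : ℕ) (hj : j < 6) (h : Sec j (BarycentricHexacarpet.rt y)) =>
    (⟨j, hj, h⟩ : Hex (BarycentricHexacarpet.rt y))
  interval_cases i
  · refine this 3 (by norm_num) ?_
    simp [Sec, al, be, cor, BarycentricHexacarpet.rt] at *; refine ⟨?_, ?_, ?_⟩ <;> linarith
  · refine this 2 (by norm_num) ?_
    simp [Sec, al, be, cor, BarycentricHexacarpet.rt] at *; refine ⟨?_, ?_, ?_⟩ <;> linarith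
  · refine this 1 (by norm_num) ?_
    simp [Sec, al, be, cor, BarycentricHexacarpet.rt] at *; refine ⟨?_, ?_, ?_⟩ <;> linarith
  · refine this 0 (by norm_num) ?_
    simp [Sec, al, be, cor, BarycentricHexacarpet.rt] at *; refine ⟨?_, ?_, ?_⟩ <;> linarith
  · refine this 5 (by norm_num) ?_
    simp [Sec, al, be, cor, BarycentricHexacarpet.rt] at *; refine ⟨?_, ?_, ?_⟩ <;> linarith
  · refine this 4 (by norm_num) ?_
    simp [Sec, al, be, cor, BarycentricHexacarpet.rt] at *; refine ⟨?_, ?_, ?_⟩ <;> linarith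

/-- The zero set of `l0`, `l1`, `l2` lies on the boundary of the hexagon. -/
lemma bd_sum {i y} (hi : i < 6) (h : Sec i y) (hb : l0 y = 0 ∨ l1 y = 0 ∨ l2 y = 0) :
    al i y + be i y = 1 := by
  rw [l0_sec hi h, l1_sec hi h, l2_sec hi h] at hb
  obtain ⟨h1, h2, h3⟩ := h
  generalize al i y = a at *
  generalize be i y = b at *
  rcases hb with hb | hb | hb <;> interval_cases i <;> simp only [lv0, lv1, lv2] at hb <;> linarith

/-- A path along two sides of the hexagon, from `cor 2` to `cor 0`, parametrized by the value of `l0`. -/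
def kp (l : ℝ) : Pt := (2 * l - 1, min 1 (2 - 2 * l))

lemma kp_hi {l : ℝ} (h : 1 / 2 ≤ l) : kp l = (2 * l - 1, 2 - 2 * l) := by
  rw [kp, min_eq_right (by linarith)]
lemma kp_lo {l : ℝ} (h : l ≤ 1 / 2) : kp l = (2 * l - 1, 1) := by
  rw [kp, min_eq_left (by linarith)]

/-- Two functions for gluing, built from a potential between opposite sides. Let `g` be the
symmetrized potential and `ψ = min (g, g ∘ rs)`. Since `g ∘ rs` solves the problem for another
pair of sides and `max (g, g ∘ rs)` is `1 - ψ ∘ (-1)`, the inequality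
`E(min) + E(max) ≤ E(g) + E(g ∘ rs)` gives `E(ψ) ≤ E(g)`. On the boundary `ψ` depends only on `l0`,
vanishes where `l0 = 0`, and its profile `σ` satisfies `σ l + σ (1 - l) = 1`; `ψ'` is the mirror
image of `ψ`, with `l2` in place of `l0`. -/
lemma exists_psi {d : ℕ} {h : Pt → ℝ} (hA : Adm d h) : ∃ (ψ ψ' : Pt → ℝ) (σ : ℝ → ℝ),
    En d ψ ≤ En d h ∧ En d ψ' ≤ En d h ∧ σ 0 = 0 ∧ (∀ l, 0 ≤ l → l ≤ 1 → σ l + σ (1 - l) = 1) ∧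
    ∀ y, Hex y → (l0 y = 0 ∨ l1 y = 0 ∨ l2 y = 0) → ψ y = σ (l0 y) ∧ ψ' y = σ (l2 y) := by
  obtain ⟨g, hE, gr, gn, g01, gp, gm, gb0, gb1⟩ := exists_sym hA
  set ψ : Pt → ℝ := fun p => min (g p) (g (rs p)) with hψ
  have ψs : ∀ p, ψ (rs p) = ψ p := fun p => by simp only [hψ]; rw [sym_rs.inv, min_comm]
  have rsn : ∀ p, rs (-p) = - rs p := fun p => by ext <;> simp [rs]; ring
  have hmax : ∀ p, max (g p) (g (rs p)) = 1 - ψ (-p) := fun p => by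
    simp only [hψ]; rw [rsn, gn, gn]
    rcases le_total (g p) (g (rs p)) with h | h
    · rw [max_eq_right h, min_eq_right (by linarith)]; ring
    · rw [max_eq_left h, min_eq_left (by linarith)]; ring
  have E1 : En d ψ ≤ En d h := by
    have := En_le2 (d := d) (f1 := ψ) (f2 := fun p => max (g p) (g (rs p))) (g1 := g)
      (g2 := fun p => g (rs p)) (a := 1) (b := 1) (fun p q _ => by
        have := sq_min_max (g p) (g (rs p)) (g q) (g (rs q))
        simp only [hψ]; linarith)
    rw [sym_rs.En, funext hmax, En_one_sub d (fun p => ψ (-p)), sym_neg.En] at this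
    linarith
  have z1 : ∀ p, p.1 = -1 → ψ p = 0 := fun p hp => by
    simp only [hψ]; rw [gb0 p hp, min_eq_left (g01 _).1]
  have hi : ∀ l, 1 / 2 ≤ l → l ≤ 1 → ψ (kp l) = g (kp l) := fun l h1 h2 => by
    simp only [hψ]; apply min_eq_left
    rw [gb1 (rs (kp l)) (by rw [kp_hi h1]; simp [rs]; ring)]
    exact (g01 _).2
  have lo : ∀ l, 0 ≤ l → l ≤ 1 / 2 → ψ (kp l) = g (kp l) := fun l h1 h2 => by
    simp only [hψ]; apply min_eq_left
    have e1 := gm (kp l) (by rw [kp_lo h2]; simp; linarith)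
    have e2 := gp (rs (kp l)) (by rw [kp_lo h2]; simp [rs]; linarith)
    linarith
  have half : ∀ l, 1 / 2 ≤ l → l ≤ 1 → ψ (kp l) + ψ (kp (1 - l)) = 1 := fun l h1 h2 => by
    rw [hi l h1 h2, lo (1 - l) (by linarith) (by linarith)]
    have : kp (1 - l) = rr (kp l) := by
      rw [kp_hi h1, kp_lo (by linarith)]; ext <;> simp [rr] <;> ring
    rw [this, gr]; ring
  have k0 : ψ (kp 0) = 0 := z1 _ (by simp [kp])
  have main : ∀ y, Hex y → (l0 y = 0 ∨ l1 y = 0 ∨ l2 y = 0) → ψ y = ψ (kp (l0 y)) := by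
    rintro y ⟨i, hi, h⟩ hb
    have hs := bd_sum hi h hb
    have hl := l0_sec hi h
    obtain ⟨h1, h2, -⟩ := h
    interval_cases i <;> simp [al, be, cor, lv0] at hs hl h1 h2
    · congr 1; rw [kp_hi (by linarith)]; ext <;> simp <;> linarith
    · congr 1; rw [kp_lo (by linarith)]; ext <;> simp <;> linarith
    · have : l0 y = 0 := by linarith
      rw [this, k0]; exact z1 _ (by linarith)
    · have : l0 y = 0 := by linarith
      rw [this, k0, ← ψs]; exact z1 _ (by simp [rs]; linarith)
    · rw [← ψs]; congr 1; rw [kp_lo (by linarith)]; ext <;> simp [rs] <;> linarith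
    · rw [← ψs]; congr 1; rw [kp_hi (by linarith)]; ext <;> simp [rs] <;> linarith
  refine ⟨ψ, fun p => ψ (rt p), fun l => ψ (kp l), E1, ?_, k0, fun l h1 h2 => ?_,
    fun y hy hb => ⟨main y hy hb, ?_⟩⟩
  · rw [sym_rt.En]; exact E1
  · rcases le_total (1 / 2) l with h | h
    · exact half l h h2
    · have := half (1 - l) (by linarith) (by linarith)
      rw [sub_sub_cancel] at this
      simp only; linarith
  · have := main (rt y) hy.rt (by rw [l0_rt, l1_rt, l2_rt]; tauto)
    rw [l0_rt] at this
    exact this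

/-! ### Gluing potentials -/

/-- Comparison of sums along an injection. -/
lemma sum_le_inj {α β : Type} (s : Finset β) (t : Finset α) (i : β → α) (g : β → ℝ) (g' : α → ℝ)
    (hi : ∀ b ∈ s, i b ∈ t) (hinj : Set.InjOn i s) (hg : ∀ b ∈ s, g b ≤ g' (i b))
    (h0 : ∀ a ∈ t, 0 ≤ g' a) : ∑ b ∈ s, g b ≤ ∑ a ∈ t, g' a := by
  classical
  calc ∑ b ∈ s, g b ≤ ∑ b ∈ s, g' (i b) := Finset.sum_le_sum hg
    _ = ∑ a ∈ s.image i, g' a := (Finset.sum_image hinj).symm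
    _ ≤ ∑ a ∈ t, g' a := Finset.sum_le_sum_of_subset_of_nonneg
        (Finset.image_subset_iff.2 hi) fun a ha _ => h0 a ha

/-- Comparison of sums along a partial surjection. -/
lemma sum_le_cover {α β : Type} (s : Finset β) (t : Finset α) (Θ : α → β) (g : β → ℝ) (g' : α → ℝ)
    (hcov : ∀ b ∈ s, ∃ a ∈ t, Θ a = b ∧ g b ≤ g' a)
    (h0 : ∀ a ∈ t, 0 ≤ g' a) : ∑ b ∈ s, g b ≤ ∑ a ∈ t, g' a := by
  classical
  rcases s.eq_empty_or_nonempty with rfl | ⟨b0, hb0⟩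
  · simpa using Finset.sum_nonneg h0
  have : Nonempty α := ⟨(hcov b0 hb0).choose⟩
  choose! i hi1 hi2 hi3 using hcov
  exact sum_le_inj s t i g g' hi1
    (fun b hb b' hb' h => by rw [← hi2 b hb, ← hi2 b' hb', h]) hi3 h0

/-- Sorting key: by the value of `f`, ties being broken lexicographically so that the key is
injective. -/
def key (f : Pt → ℝ) (p : Pt) : ℝ ×ₗ (ℝ ×ₗ ℝ) := toLex (f p, toLex p)

lemma key_inj (f : Pt → ℝ) : Function.Injective (key f) := by
  intro p q h
  have := congrArg (fun x => (ofLex x).2) h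
  simpa [key] using this

lemma key_le {f : Pt → ℝ} {p q : Pt} (h : key f p < key f q) : f p ≤ f q := by
  rw [key, key, Prod.Lex.toLex_lt_toLex] at h
  rcases h with h | h
  · exact h.le
  · exact h.1.le

open Classical in
/-- The triangles of `T_{d+1}`, each listed once, with its vertices in decreasing order of `f`. -/
def IF (f : Pt → ℝ) (d : ℕ) : Finset (Pt × Pt × Pt) :=
  ((VS_finite d).toFinset ×ˢ (VS_finite d).toFinset ×ˢ (VS_finite d).toFinset).filter
    fun t => Srt (key f) d t.1 t.2.1 t.2.2

lemma mem_IF {f : Pt → ℝ} {d : ℕ} {t} : t ∈ IF f d ↔ Srt (key f) d t.1 t.2.1 t.2.2 := by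
  simp only [IF, Finset.mem_filter, Finset.mem_product, Set.Finite.mem_toFinset, and_iff_right_iff_imp]
  exact fun h => h.1.mem_VS

/-- The squared differences of `f` along the sides of all triangles add up to at most `2 E(f)`: an
edge contributes `(f p - f q)²` to the left side once for each of the at most two triangles containing
it, and at least `2 (f p - f q)²` to `2 E(f)`, its conductance being at least `1`. -/
lemma sum_S_le (f : Pt → ℝ) (d : ℕ) :
    ∑ t ∈ IF f d, ((f t.1 - f t.2.1) ^ 2 + (f t.2.1 - f t.2.2) ^ 2 + (f t.1 - f t.2.2) ^ 2) ≤
      2 * En d f := by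
  classical
  set κ := key f
  set V := (VS_finite d).toFinset with hV
  -- pairs directed downwards
  set P := (PF d).filter fun e => Adj d e.1 e.2 ∧ κ e.2 < κ e.1 with hP
  have hN : ∀ e : Pt × Pt, ((V.filter fun r => Tri d e.1 e.2 r).card : ℝ) ≤ 2 := by
    intro e
    norm_cast
    by_contra hc
    obtain ⟨a, b, c, ha, hb, hc, h1, h2, h3⟩ := Finset.two_lt_card_iff.1 (not_le.1 hc)
    simp only [Finset.mem_filter] at ha hb hc
    rcases le_two ha.2 hb.2 hc.2 with h | h | h <;> contradiction
  set N := P.sigma fun e : Pt × Pt => V.filter fun r => Tri d e.1 e.2 r with hNdef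
  have step1 : ∑ t ∈ IF f d, ((f t.1 - f t.2.1) ^ 2 + (f t.2.1 - f t.2.2) ^ 2 + (f t.1 - f t.2.2) ^ 2)
      ≤ ∑ x ∈ N, (f x.1.1 - f x.1.2) ^ 2 := by
    have : ∀ t : Pt × Pt × Pt, (f t.1 - f t.2.1) ^ 2 + (f t.2.1 - f t.2.2) ^ 2 + (f t.1 - f t.2.2) ^ 2
        = ∑ j : Fin 3, ((![(f t.1 - f t.2.1) ^ 2, (f t.2.1 - f t.2.2) ^ 2, (f t.1 - f t.2.2) ^ 2] : Fin 3 → ℝ) j) := by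
      intro t; simp [Fin.sum_univ_three]
    simp only [this]
    rw [← Finset.sum_product']
    refine sum_le_inj (α := (_ : Pt × Pt) × Pt) _ _ (fun x => (![⟨(x.1.1, x.1.2.1), x.1.2.2⟩, ⟨(x.1.2.1, x.1.2.2), x.1.1⟩,
      ⟨(x.1.1, x.1.2.2), x.1.2.1⟩] : Fin 3 → (_ : Pt × Pt) × Pt) x.2) _ _ ?_ ?_ ?_ ?_
    · rintro ⟨⟨a, b, c⟩, j⟩ h
      rw [Finset.mem_product, mem_IF] at h
      obtain ⟨⟨ht, h1, h2⟩, -⟩ := h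
      obtain ⟨m1, m2, m3⟩ := ht.mem_VS
      have h3 := h2.trans h1
      have q1 := ht.rot
      have q2 := ht.rot.rot.swap
      fin_cases j
      · simp only [hNdef, hP, hV, PF, Finset.mem_sigma, Finset.mem_filter, Finset.mem_product, Set.Finite.mem_toFinset]
        exact ⟨⟨⟨m1, m2⟩, ⟨_, ht⟩, h1⟩, m3, ht⟩
      · simp only [hNdef, hP, hV, PF, Finset.mem_sigma, Finset.mem_filter, Finset.mem_product, Set.Finite.mem_toFinset]
        exact ⟨⟨⟨m2, m3⟩, ⟨_, q1⟩, h2⟩, m1, q1⟩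
      · simp only [hNdef, hP, hV, PF, Finset.mem_sigma, Finset.mem_filter, Finset.mem_product, Set.Finite.mem_toFinset]
        exact ⟨⟨⟨m1, m3⟩, ⟨_, q2⟩, h3⟩, m2, q2⟩
    · rintro ⟨⟨a, b, c⟩, j⟩ h ⟨⟨a', b', c'⟩, j'⟩ h' heq
      rw [Finset.mem_coe, Finset.mem_product, mem_IF] at h h'
      obtain ⟨⟨ht, h1, h2⟩, -⟩ := h
      obtain ⟨⟨ht', h1', h2'⟩, -⟩ := h'
      simp only at h1 h2 h1' h2'
      have h3 := h2.trans h1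
      have h3' := h2'.trans h1'
      fin_cases j <;> fin_cases j' <;> simp at heq <;> obtain ⟨⟨rfl, rfl⟩, rfl⟩ := heq <;>
        first
        | rfl
        | exact absurd h1 h1'.not_gt
        | exact absurd h1 h2'.not_gt
        | exact absurd h1 h3'.not_gt
        | exact absurd h2 h1'.not_gt
        | exact absurd h2 h2'.not_gt
        | exact absurd h2 h3'.not_gt
    · rintro ⟨⟨a, b, c⟩, j⟩ h
      fin_cases j <;> simp
    · intro x _; positivity
  have step2 : ∑ x ∈ N, (f x.1.1 - f x.1.2) ^ 2 ≤ ∑ e ∈ P, 2 * (f e.1 - f e.2) ^ 2 := by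
    rw [hNdef, Finset.sum_sigma]
    refine Finset.sum_le_sum fun e _ => ?_
    dsimp only
    rw [Finset.sum_const, nsmul_eq_mul]
    exact mul_le_mul_of_nonneg_right (hN e) (sq_nonneg _)
  set P' := (PF d).filter fun e => Adj d e.1 e.2 ∧ κ e.1 < κ e.2 with hP'
  have step3 : ∑ e ∈ P, (f e.1 - f e.2) ^ 2 ≤ ∑ e ∈ P', (f e.1 - f e.2) ^ 2 := by
    refine sum_le_inj _ _ Prod.swap _ _ ?_ Prod.swap_injective.injOn ?_ fun _ _ => sq_nonneg _
    · rintro ⟨p, q⟩ h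
      simp only [hP, Finset.mem_filter] at h
      simp only [hP', Prod.swap, Finset.mem_filter]
      exact ⟨h.2.1.symm.mem_PF, h.2.1.symm, h.2.2⟩
    · rintro ⟨p, q⟩ _
      simp only [Prod.swap]; nlinarith
  have step4 : ∑ e ∈ P, (f e.1 - f e.2) ^ 2 + ∑ e ∈ P', (f e.1 - f e.2) ^ 2 ≤
      ∑ e ∈ PF d, cc d e.1 e.2 * (f e.1 - f e.2) ^ 2 := by
    rw [← Finset.sum_union]
    · calc _ ≤ ∑ e ∈ P ∪ P', cc d e.1 e.2 * (f e.1 - f e.2) ^ 2 := by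
            refine Finset.sum_le_sum fun e he => ?_
            have : Adj d e.1 e.2 := by
              simp only [hP, hP', Finset.mem_union, Finset.mem_filter] at he; tauto
            nlinarith [one_le_cc this, sq_nonneg (f e.1 - f e.2)]
        _ ≤ _ := Finset.sum_le_sum_of_subset_of_nonneg
            (Finset.union_subset (Finset.filter_subset _ _) (Finset.filter_subset _ _))
            fun e _ _ => mul_nonneg (cc_nonneg _ _ _) (sq_nonneg _)
    · rw [Finset.disjoint_left]
      intro e he he'
      simp only [hP, hP', Finset.mem_filter] at he he'
      exact absurd he.2.2 he'.2.2.not_gt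
  rw [← Finset.mul_sum] at step2
  rw [En_eq]
  linarith

/-- The interpolation of the values `f a, f b, f c` on the triangle `a b c`, as a function on the
hexagon: `ψ` is used for the step from `f b` to `f a` and `ψ'` for the step from `f b` to `f c`. -/
def FT (f ψ ψ' : Pt → ℝ) (a b c y : Pt) : ℝ := f b + (f a - f b) * ψ y + (f c - f b) * ψ' y

/-- The boundary behaviour provided by `exists_psi`. -/
def BdForm (ψ ψ' : Pt → ℝ) (σ : ℝ → ℝ) : Prop :=
  σ 0 = 0 ∧ (∀ l, 0 ≤ l → l ≤ 1 → σ l + σ (1 - l) = 1) ∧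
    ∀ y, Hex y → (l0 y = 0 ∨ l1 y = 0 ∨ l2 y = 0) → ψ y = σ (l0 y) ∧ ψ' y = σ (l2 y)

lemma BdForm.sum {ψ ψ' σ} (h : BdForm ψ ψ' σ) {y} (hy : Hex y) (hb : l0 y = 0 ∨ l1 y = 0 ∨ l2 y = 0) :
    σ (l0 y) + σ (l1 y) + σ (l2 y) = 1 := by
  obtain ⟨n0, n1, n2⟩ := hy.nonneg
  have hs := hy.sum
  rcases hb with hb | hb | hb
  · have e : l2 y = 1 - l1 y := by linarith
    have := h.2.1 (l1 y) n1 (by linarith)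
    rw [hb, h.1, e]; linarith
  · have e : l2 y = 1 - l0 y := by linarith
    have := h.2.1 (l0 y) n0 (by linarith)
    rw [hb, h.1, e]; linarith
  · have e : l1 y = 1 - l0 y := by linarith
    have := h.2.1 (l0 y) n0 (by linarith)
    rw [hb, h.1, e]; linarith

lemma FT_bd {ψ ψ' σ} (h : BdForm ψ ψ' σ) (f : Pt → ℝ) (a b c : Pt) {y} (hy : Hex y)
    (hb : l0 y = 0 ∨ l1 y = 0 ∨ l2 y = 0) :
    FT f ψ ψ' a b c y = f a * σ (l0 y) + f b * σ (l1 y) + f c * σ (l2 y) := by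
  obtain ⟨h1, h2⟩ := h.2.2 y hy hb
  have := h.sum hy hb
  rw [FT, h1, h2]
  linear_combination -(f b) * this

/-- On the boundary the interpolation depends only on the weight function of the image point. -/
lemma FT_bd_sum {ψ ψ' σ} (h : BdForm ψ ψ' σ) (f : Pt → ℝ) {d : ℕ} {a b c : Pt} (ht : Tri d a b c) {y}
    (hy : Hex y) (hb : l0 y = 0 ∨ l1 y = 0 ∨ l2 y = 0) :
    FT f ψ ψ' a b c y =
      ∑ p ∈ (VS_finite d).toFinset, f p * σ (wf a b c (l0 y) (l1 y) (l2 y) p) := by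
  classical
  rw [FT_bd h f a b c hy hb]
  have hsub : ({a, b, c} : Finset Pt) ⊆ (VS_finite d).toFinset := by
    intro p hp
    obtain ⟨h1, h2, h3⟩ := ht.mem_VS
    simp only [Finset.mem_insert, Finset.mem_singleton] at hp
    simp only [Set.Finite.mem_toFinset]
    rcases hp with rfl | rfl | rfl <;> assumption
  rw [← Finset.sum_subset hsub]
  · rw [Finset.sum_insert, Finset.sum_insert, Finset.sum_singleton, wf_fst ht.ne12 ht.ne13,
      wf_snd ht.ne12 ht.ne23, wf_thd ht.ne23 ht.ne13]
    · ring
    · simp [ht.ne23]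
    · simp [ht.ne12, ht.ne13]
  · intro p _ hp
    simp only [Finset.mem_insert, Finset.mem_singleton, not_or] at hp
    rcases wf_cases ht.ne12 ht.ne23 ht.ne13 (l0 y) (l1 y) (l2 y) p with k | k | k | k
    · exact absurd k.1 hp.1
    · exact absurd k.1 hp.2.1
    · exact absurd k.1 hp.2.2
    · rw [k.2.2.2, h.1, mul_zero]

lemma wf_mem {a b c : Pt} {x y z : ℝ} {p : Pt} (h : wf a b c x y z p ≠ 0) : p = a ∨ p = b ∨ p = c := by
  by_contra hc
  simp only [not_or] at hc
  exact h (by simp [wf, hc])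

lemma srt_eq {L : Type} [LinearOrder L] {κ : Pt → L} {d a b c a' b' c'} (h : Srt κ d a b c)
    (h' : Srt κ d a' b' c') (ha : a = a' ∨ a = b' ∨ a = c') (hb : b = a' ∨ b = b' ∨ b = c')
    (hc : c = a' ∨ c = b' ∨ c = c') : a = a' ∧ b = b' ∧ c = c' := by
  obtain ⟨-, h1, h2⟩ := h
  obtain ⟨-, h1', h2'⟩ := h'
  have h3 := h2.trans h1
  have h3' := h2'.trans h1'
  rcases ha with rfl | rfl | rfl <;> rcases hb with rfl | rfl | rfl <;>
    rcases hc with rfl | rfl | rfl <;>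
    first
    | exact ⟨rfl, rfl, rfl⟩
    | exact absurd h1 (lt_irrefl _)
    | exact absurd h2 (lt_irrefl _)
    | exact absurd h3 (lt_irrefl _)
    | exact absurd h1 h1'.not_gt
    | exact absurd h1 h2'.not_gt
    | exact absurd h1 h3'.not_gt
    | exact absurd h2 h1'.not_gt
    | exact absurd h2 h2'.not_gt
    | exact absurd h2 h3'.not_gt

/-- A point interior to the image of `th` determines the sorted triangle and its preimage. -/
lemma th_pos {L : Type} [LinearOrder L] {κ : Pt → L} {d a b c a' b' c' y y'} (h : Srt κ d a b c)
    (h' : Srt κ d a' b' c') (hy : Hex y) (hy' : Hex y')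
    (hb : ¬ (l0 y = 0 ∨ l1 y = 0 ∨ l2 y = 0))
    (hw : wf a b c (l0 y) (l1 y) (l2 y) = wf a' b' c' (l0 y') (l1 y') (l2 y'))
    (he : th a b c y = th a' b' c' y') : a = a' ∧ b = b' ∧ c = c' ∧ y = y' := by
  simp only [not_or] at hb
  have k1 : wf a' b' c' (l0 y') (l1 y') (l2 y') a ≠ 0 := by
    rw [← hw, wf_fst h.1.ne12 h.1.ne13]; exact hb.1
  have k2 : wf a' b' c' (l0 y') (l1 y') (l2 y') b ≠ 0 := by
    rw [← hw, wf_snd h.1.ne12 h.1.ne23]; exact hb.2.1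
  have k3 : wf a' b' c' (l0 y') (l1 y') (l2 y') c ≠ 0 := by
    rw [← hw, wf_thd h.1.ne23 h.1.ne13]; exact hb.2.2
  obtain ⟨rfl, rfl, rfl⟩ := srt_eq h h' (wf_mem k1) (wf_mem k2) (wf_mem k3)
  exact ⟨rfl, rfl, rfl, th_inj h.1 hy hy' he⟩

/-- Interpolations on different triangles agree at common points, because common points of two
triangles are boundary points with the same weights. -/
lemma FT_wd {ψ ψ' σ} (h : BdForm ψ ψ' σ) (f : Pt → ℝ) {d : ℕ} {a b c a' b' c' y y' : Pt}
    (ht : Srt (key f) d a b c) (ht' : Srt (key f) d a' b' c') (hy : Hex y) (hy' : Hex y')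
    (he : th a b c y = th a' b' c' y') : FT f ψ ψ' a b c y = FT f ψ ψ' a' b' c' y' := by
  obtain ⟨n0, n1, n2⟩ := hy.nonneg
  obtain ⟨n0', n1', n2'⟩ := hy'.nonneg
  have hw := cons d ht.1 ht'.1 n0 n1 n2 hy.sum n0' n1' n2' hy'.sum he
  by_cases hb : l0 y = 0 ∨ l1 y = 0 ∨ l2 y = 0
  · by_cases hb' : l0 y' = 0 ∨ l1 y' = 0 ∨ l2 y' = 0
    · rw [FT_bd_sum h f ht.1 hy hb, FT_bd_sum h f ht'.1 hy' hb', hw]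
    · obtain ⟨rfl, rfl, rfl, rfl⟩ := th_pos ht' ht hy' hy hb' hw.symm he.symm
      rfl
  · obtain ⟨rfl, rfl, rfl, rfl⟩ := th_pos ht ht' hy hy' hb hw he
    rfl

open Classical in
/-- The glued function: on the image of `th` over a sorted triangle `a b c` it is
`FT f ψ ψ' a b c`. By `FT_wd` the choice does not matter (`Gl_eq`). Points outside get the value `0`. -/
def Gl (f ψ ψ' : Pt → ℝ) (d : ℕ) (x : Pt) : ℝ :=
  if h : ∃ t : (Pt × Pt × Pt) × Pt, Srt (key f) d t.1.1 t.1.2.1 t.1.2.2 ∧ Hex t.2 ∧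
      th t.1.1 t.1.2.1 t.1.2.2 t.2 = x then
    FT f ψ ψ' h.choose.1.1 h.choose.1.2.1 h.choose.1.2.2 h.choose.2 else 0

lemma Gl_eq {ψ ψ' σ} (h : BdForm ψ ψ' σ) (f : Pt → ℝ) {d : ℕ} {a b c y : Pt}
    (ht : Srt (key f) d a b c) (hy : Hex y) :
    Gl f ψ ψ' d (th a b c y) = FT f ψ ψ' a b c y := by
  have hex : ∃ t : (Pt × Pt × Pt) × Pt, Srt (key f) d t.1.1 t.1.2.1 t.1.2.2 ∧ Hex t.2 ∧
      th t.1.1 t.1.2.1 t.1.2.2 t.2 = th a b c y := ⟨((a, b, c), y), ht, hy, rfl⟩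
  rw [Gl, dif_pos hex]
  exact FT_wd h f hex.choose_spec.1 ht hex.choose_spec.2.1 hy hex.choose_spec.2.2

lemma Hex.fst {y} (h : Hex y) : -1 ≤ y.1 ∧ y.1 ≤ 1 := by
  obtain ⟨i, hi, h1, h2, h3⟩ := h
  interval_cases i <;> simp [al, be, cor] at * <;> constructor <;> linarith

lemma not_col {d a b c} (h : Tri d a b c) (x : ℝ) (ha : a.1 = x) (hb : b.1 = x) (hc : c.1 = x) : False :=
  h.area_ne (by rw [area, ha, hb, hc]; ring)

/-- Where the first coordinate is extremal, so it is at every vertex of the triangle carrying a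
positive weight, and the boundary form of the interpolation gives the required value. -/
lemma Gl_adm {ψ ψ' σ} (h : BdForm ψ ψ' σ) {f : Pt → ℝ} {d e : ℕ} (hf : Adm d f) :
    Adm (d + e + 1) (Gl f ψ ψ' d) := by
  have gen : ∀ p, Vtx (d + e + 1) p → ∃ a b c y, Srt (key f) d a b c ∧ Hex y ∧ p = th a b c y := by
    rintro p ⟨q, r, hp⟩
    obtain ⟨a, b, c, y, _, _, hs, hy, rfl, _, _⟩ := hp.decomp (key_inj f) e rfl
    exact ⟨a, b, c, y, hs, hy.hex.1, rfl⟩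
  constructor
  · intro p hp hx
    obtain ⟨a, b, c, y, hs, hy, rfl⟩ := gen p hp
    obtain ⟨n0, n1, n2⟩ := hy.nonneg
    have hsum := hy.sum
    obtain ⟨xa, xb, xc⟩ := hs.1.hex
    have ya := xa.fst
    have yb := xb.fst
    have yc := xc.fst
    simp only [th, Prod.fst_add, Prod.smul_fst, smul_eq_mul] at hx
    have pa := mul_nonneg n0 (by linarith : 0 ≤ a.1 + 1)
    have pb := mul_nonneg n1 (by linarith : 0 ≤ b.1 + 1)
    have pc := mul_nonneg n2 (by linarith : 0 ≤ c.1 + 1)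
    have qa : l0 y = 0 ∨ a.1 + 1 = 0 := mul_eq_zero.1 (by linarith)
    have qb : l1 y = 0 ∨ b.1 + 1 = 0 := mul_eq_zero.1 (by linarith)
    have qc : l2 y = 0 ∨ c.1 + 1 = 0 := mul_eq_zero.1 (by linarith)
    have hb : l0 y = 0 ∨ l1 y = 0 ∨ l2 y = 0 := by
      by_contra hc
      simp only [not_or] at hc
      exact not_col hs.1 (-1) (by linarith [qa.resolve_left hc.1]) (by linarith [qb.resolve_left hc.2.1])
        (by linarith [qc.resolve_left hc.2.2])
    rw [Gl_eq h f hs hy, FT_bd h f a b c hy hb]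
    have ra : f a * σ (l0 y) = 0 := by
      rcases qa with q | q
      · rw [q, h.1, mul_zero]
      · rw [hf.1 a ⟨_, _, hs.1⟩ (by linarith), zero_mul]
    have rb : f b * σ (l1 y) = 0 := by
      rcases qb with q | q
      · rw [q, h.1, mul_zero]
      · rw [hf.1 b ⟨_, _, hs.1.rot⟩ (by linarith), zero_mul]
    have rc : f c * σ (l2 y) = 0 := by
      rcases qc with q | q
      · rw [q, h.1, mul_zero]
      · rw [hf.1 c ⟨_, _, hs.1.rot.rot⟩ (by linarith), zero_mul]
    rw [ra, rb, rc]; norm_num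
  · intro p hp hx
    obtain ⟨a, b, c, y, hs, hy, rfl⟩ := gen p hp
    obtain ⟨n0, n1, n2⟩ := hy.nonneg
    have hsum := hy.sum
    obtain ⟨xa, xb, xc⟩ := hs.1.hex
    have ya := xa.fst
    have yb := xb.fst
    have yc := xc.fst
    simp only [th, Prod.fst_add, Prod.smul_fst, smul_eq_mul] at hx
    have pa := mul_nonneg n0 (by linarith : 0 ≤ 1 - a.1)
    have pb := mul_nonneg n1 (by linarith : 0 ≤ 1 - b.1)
    have pc := mul_nonneg n2 (by linarith : 0 ≤ 1 - c.1)
    have qa : l0 y = 0 ∨ 1 - a.1 = 0 := mul_eq_zero.1 (by linarith)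
    have qb : l1 y = 0 ∨ 1 - b.1 = 0 := mul_eq_zero.1 (by linarith)
    have qc : l2 y = 0 ∨ 1 - c.1 = 0 := mul_eq_zero.1 (by linarith)
    have hb : l0 y = 0 ∨ l1 y = 0 ∨ l2 y = 0 := by
      by_contra hc
      simp only [not_or] at hc
      exact not_col hs.1 1 (by linarith [qa.resolve_left hc.1]) (by linarith [qb.resolve_left hc.2.1])
        (by linarith [qc.resolve_left hc.2.2])
    rw [Gl_eq h f hs hy, FT_bd h f a b c hy hb]
    have ra : f a * σ (l0 y) = σ (l0 y) := by
      rcases qa with q | q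
      · rw [q, h.1, mul_zero]
      · rw [hf.2 a ⟨_, _, hs.1⟩ (by linarith), one_mul]
    have rb : f b * σ (l1 y) = σ (l1 y) := by
      rcases qb with q | q
      · rw [q, h.1, mul_zero]
      · rw [hf.2 b ⟨_, _, hs.1.rot⟩ (by linarith), one_mul]
    have rc : f c * σ (l2 y) = σ (l2 y) := by
      rcases qc with q | q
      · rw [q, h.1, mul_zero]
      · rw [hf.2 c ⟨_, _, hs.1.rot.rot⟩ (by linarith), one_mul]
    rw [ra, rb, rc, h.sum hy hb]

/-- With `u = f a - f b ≥ 0` and `w = f b - f c ≥ 0`, the interpolation is `u ψ - w ψ'` up to a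
constant, and `(u s - w t)² ≤ (u + w) (u s² + w t²)` gives the bound `(u + w)² M` on its energy. The
factor `2/3` comes from `(u + w)² ≤ (2/3) (u² + w² + (u + w)²)`. -/
lemma FT_En {f ψ ψ' : Pt → ℝ} {e : ℕ} {a b c : Pt} {M : ℝ} (hab : f b ≤ f a) (hbc : f c ≤ f b)
    (h : En e ψ ≤ M) (h' : En e ψ' ≤ M) : En e (FT f ψ ψ' a b c) ≤
      2 / 3 * M * ((f a - f b) ^ 2 + (f b - f c) ^ 2 + (f a - f c) ^ 2) := by
  have hM : 0 ≤ M := (En_nonneg _ _).trans h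
  set u := f a - f b with hu
  set w := f b - f c with hw
  have u0 : 0 ≤ u := by linarith
  have w0 : 0 ≤ w := by linarith
  have h1 : f a - f c = u + w := by rw [hu, hw]; ring
  have := En_le2 (d := e) (f1 := FT f ψ ψ' a b c) (f2 := fun _ => 0) (g1 := ψ) (g2 := ψ')
    (a := (u + w) * u) (b := (u + w) * w) (fun p q _ => by
      have e1 : FT f ψ ψ' a b c p - FT f ψ ψ' a b c q = u * (ψ p - ψ q) - w * (ψ' p - ψ' q) := by
        simp only [FT, hu, hw]; ring
      rw [e1]
      nlinarith [mul_nonneg (mul_nonneg u0 w0) (sq_nonneg ((ψ p - ψ q) + (ψ' p - ψ' q)))])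
  rw [En_const] at this
  have k1 := mul_le_mul_of_nonneg_left h (mul_nonneg (add_nonneg u0 w0) u0)
  have k2 := mul_le_mul_of_nonneg_left h' (mul_nonneg (add_nonneg u0 w0) w0)
  rw [h1]
  nlinarith [mul_nonneg hM (sq_nonneg (u - w))]

/-- A boundary edge of a cell may become an inner edge after gluing, so conductances only decrease. -/
lemma cc_th {d e a b c y y'} (ht : Tri d a b c) (h : Adj e y y') :
    cc (d + e + 1) (th a b c y) (th a b c y') ≤ cc e y y' := by
  have hA : Adj (d + e + 1) (th a b c y) (th a b c y') := by
    obtain ⟨r, hr⟩ := h; exact ⟨_, ht.comp hr⟩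
  unfold cc
  rw [if_pos h, if_pos hA]
  by_cases h1 : ∃! r, Tri e y y' r
  · rw [if_pos h1]; split_ifs <;> norm_num
  · rw [if_neg h1, if_neg]
    rintro ⟨r, -, hr⟩
    obtain ⟨s, hs⟩ := h
    refine h1 ⟨s, hs, fun s' hs' => ?_⟩
    exact th_inj ht hs'.hex.2.2 hs.hex.2.2 ((hr _ (ht.comp hs')).trans (hr _ (ht.comp hs)).symm)

/-- The energy of the glued function is at most the sum of the energies on the cells. -/
lemma Gl_En {ψ ψ' σ} (h : BdForm ψ ψ' σ) (f : Pt → ℝ) (d e : ℕ) :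
    En (d + e + 1) (Gl f ψ ψ' d) ≤ ∑ t ∈ IF f d, En e (FT f ψ ψ' t.1 t.2.1 t.2.2) := by
  classical
  simp only [En_eq]
  rw [← Finset.mul_sum]
  refine mul_le_mul_of_nonneg_left ?_ (by norm_num)
  rw [← Finset.sum_product']
  set G := Gl f ψ ψ' d with hG
  rw [← Finset.sum_filter_add_sum_filter_not (PF (d + e + 1)) (fun x => Adj (d + e + 1) x.1 x.2)]
  rw [Finset.sum_eq_zero (s := (PF (d + e + 1)).filter fun x => ¬ Adj (d + e + 1) x.1 x.2), add_zero]
  swap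
  · intro x hx
    rw [cc_zero (Finset.mem_filter.1 hx).2, zero_mul]
  refine sum_le_cover _ _ (fun x : (Pt × Pt × Pt) × (Pt × Pt) =>
    (th x.1.1 x.1.2.1 x.1.2.2 x.2.1, th x.1.1 x.1.2.1 x.1.2.2 x.2.2)) _ _ ?_ ?_
  · rintro ⟨p, q⟩ hx
    obtain ⟨r, hx⟩ := (Finset.mem_filter.1 hx).2
    obtain ⟨a, b, c, y, y', y'', hs, hy, e1, e2, -⟩ := hx.decomp (key_inj f) e rfl
    simp only at e1 e2
    subst e1 e2
    have hA : Adj e y y' := ⟨_, hy⟩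
    refine ⟨((a, b, c), (y, y')), ?_, rfl, ?_⟩
    · rw [Finset.mem_product, mem_IF]
      exact ⟨hs, hA.mem_PF⟩
    · simp only [hG]
      rw [Gl_eq h f hs hy.hex.1, Gl_eq h f hs hy.hex.2.1]
      exact mul_le_mul_of_nonneg_right (cc_th hs.1 hA) (sq_nonneg _)
  · intro x _
    exact mul_nonneg (cc_nonneg _ _ _) (sq_nonneg _)

/-- Submultiplicativity, up to `4/3`, of the minimal energies, on the level of admissible functions. -/
theorem compose {d e : ℕ} {f g : Pt → ℝ} (hf : Adm d f) (hg : Adm e g) :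
    ∃ F, Adm (d + e + 1) F ∧ En (d + e + 1) F ≤ 4 / 3 * (En d f * En e g) := by
  obtain ⟨ψ, ψ', σ, E1, E2, hB⟩ := exists_psi hg
  have hB : BdForm ψ ψ' σ := hB
  refine ⟨Gl f ψ ψ' d, Gl_adm hB hf, (Gl_En hB f d e).trans ?_⟩
  calc _ ≤ ∑ t ∈ IF f d, 2 / 3 * En e g *
        ((f t.1 - f t.2.1) ^ 2 + (f t.2.1 - f t.2.2) ^ 2 + (f t.1 - f t.2.2) ^ 2) := by
        refine Finset.sum_le_sum fun t ht => ?_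
        have ht := mem_IF.1 ht
        exact FT_En (key_le ht.2.1) (key_le ht.2.2) E1 E2
    _ ≤ 2 / 3 * En e g * (2 * En d f) := by
        rw [← Finset.mul_sum]
        exact mul_le_mul_of_nonneg_left (sum_S_le f d) (mul_nonneg (by norm_num) (En_nonneg _ _))
    _ = _ := by ring

/-! ### Effective conductance -/

/-- A single edge bounds the energy from below. -/
lemma Adj.sq_le {k p q} (h : Adj k p q) (f : Pt → ℝ) : (f p - f q) ^ 2 ≤ 2 * En k f := by
  rw [En_eq]
  have h1 := Finset.single_le_sum (f := fun e : Pt × Pt => cc k e.1 e.2 * (f e.1 - f e.2) ^ 2)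
    (fun e _ => mul_nonneg (cc_nonneg k e.1 e.2) (sq_nonneg (f e.1 - f e.2))) h.mem_PF
  simp only at h1
  have h2 := mul_le_mul_of_nonneg_right (one_le_cc h) (sq_nonneg (f p - f q))
  linarith

/-- The same for an edge of a coarser triangulation, which is subdivided into `2 ^ k` edges. -/
lemma Tri.sq_le {j k n : ℕ} {a b c : Pt} (h : Tri j a b c) (hk : j + k = n) (f : Pt → ℝ) :
    (f a - f b) ^ 2 ≤ 4 ^ k * (2 * En n f) := by
  induction k generalizing j a b c with
  | zero =>
    obtain rfl : j = n := by omega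
    simpa using Adj.sq_le ⟨c, h⟩ f
  | succ k ih =>
    have h1 := ih h.child (by omega)
    have h2 := ih h.swap.child (by omega)
    rw [mpt_comm b a] at h2
    have h3 := sq_nonneg (f a - f (mpt a b) + (f b - f (mpt a b)))
    have h4 : (4 : ℝ) ^ (k + 1) * (2 * En n f) = 4 * (4 ^ k * (2 * En n f)) := by ring
    rw [h4]
    nlinarith

lemma Vtx.succ {d p} (h : Vtx d p) : Vtx (d + 1) p := by
  obtain ⟨q, r, h⟩ := h
  exact ⟨_, _, h.child⟩

lemma Vtx.of_zero {p} (h : Vtx 0 p) (d : ℕ) : Vtx d p := by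
  induction d with
  | zero => exact h
  | succ d ih => exact ih.succ

/-- The path `cor 3, cor 4, cor 5` joins the two sides, so the energy of admissible functions is
bounded away from `0`. -/
lemma Adm.pos {n : ℕ} {f : Pt → ℝ} (h : Adm n f) : 1 ≤ 4 ^ n * (8 * En n f) := by
  have e1 := (Tri.base 3 (by norm_num)).sq_le (n := n) (zero_add n) f
  have e2 := (Tri.base 4 (by norm_num)).sq_le (n := n) (zero_add n) f
  have v3 : Vtx n (cor 3) := Vtx.of_zero ⟨_, _, Tri.base 3 (by norm_num)⟩ n
  have v5 : Vtx n (cor 5) := Vtx.of_zero ⟨_, _, Tri.base 5 (by norm_num)⟩ n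
  have z3 := h.1 _ v3 rfl
  have z5 := h.2 _ v5 rfl
  norm_num only [Nat.reduceAdd] at e1 e2
  rw [z3] at e1
  rw [z5] at e2
  nlinarith [sq_nonneg (f (cor 4) - 1 / 2)]

lemma exists_adm (n : ℕ) : ∃ f, Adm n f := by
  classical
  exact ⟨fun p => if p.1 = 1 then 1 else 0, fun p _ h => by simp [h]; norm_num, fun p _ h => by simp [h]⟩

/-- The effective conductance, that is, the infimum of the energies of admissible functions. -/
def cap (n : ℕ) : ℝ := sInf {e | ∃ f, Adm n f ∧ e = En n f}

lemma cap_bdd (n : ℕ) : BddBelow {e | ∃ f, Adm n f ∧ e = En n f} :=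
  ⟨0, by rintro _ ⟨f, -, rfl⟩; exact En_nonneg _ _⟩

lemma cap_ne (n : ℕ) : {e | ∃ f, Adm n f ∧ e = En n f}.Nonempty := by
  obtain ⟨f, hf⟩ := exists_adm n
  exact ⟨_, f, hf, rfl⟩

lemma cap_pos (n : ℕ) : 0 < cap n := by
  refine lt_of_lt_of_le (b := (4 ^ n * 8 : ℝ)⁻¹) (by positivity) (le_csInf (cap_ne n) ?_)
  rintro _ ⟨f, hf, rfl⟩
  rw [inv_le_iff_one_le_mul₀ (by positivity)]
  linarith [hf.pos]

lemma cap_le (d e : ℕ) : cap (d + e + 1) ≤ 4 / 3 * (cap d * cap e) := by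
  have h1 : ∀ f g, Adm d f → Adm e g → cap (d + e + 1) ≤ 4 / 3 * (En d f * En e g) := by
    intro f g hf hg
    obtain ⟨F, hF, hE⟩ := compose hf hg
    exact (csInf_le (cap_bdd _) ⟨F, hF, rfl⟩).trans hE
  have h2 : ∀ f, Adm d f → cap (d + e + 1) ≤ 4 / 3 * (En d f * cap e) := by
    intro f hf
    have hp : 0 < En d f := (cap_pos d).trans_le (csInf_le (cap_bdd d) ⟨f, hf, rfl⟩)
    have : cap (d + e + 1) / (4 / 3 * En d f) ≤ cap e := by
      refine le_csInf (cap_ne e) ?_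
      rintro _ ⟨g, hg, rfl⟩
      rw [div_le_iff₀ (by positivity)]
      linarith [h1 f g hf hg]
    rw [div_le_iff₀ (by positivity)] at this
    linarith
  have hp := cap_pos e
  have : cap (d + e + 1) / (4 / 3 * cap e) ≤ cap d := by
    refine le_csInf (cap_ne d) ?_
    rintro _ ⟨f, hf, rfl⟩
    rw [div_le_iff₀ (by positivity)]
    linarith [h2 f hf]
  rw [div_le_iff₀ (by positivity)] at this
  linarith

/-! ### Comparison with the regular hexagon -/

/-- The linear map from the coordinates of `cor` to those of the regular hexagon. -/
def Phi : Pt ≃ Pt where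
  toFun p := (p.1 + p.2 / 2, p.2 * (√3 / 2))
  invFun q := (q.1 - q.2 / √3, q.2 * 2 / √3)
  left_inv p := by
    have h : √3 ≠ 0 := by positivity
    ext <;> simp <;> field_simp <;> ring
  right_inv q := by
    have h : √3 ≠ 0 := by positivity
    ext <;> simp <;> field_simp <;> ring

lemma Phi_apply (p : Pt) : Phi p = (p.1 + p.2 / 2, p.2 * (√3 / 2)) := rfl

lemma Phi_mpt (a b : Pt) : Phi (mpt a b) = mpt (Phi a) (Phi b) := by
  simp only [Phi_apply, mpt]; ext <;> simp <;> ring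

lemma Phi_bary (a b c : Pt) : Phi (bary a b c) = bary (Phi a) (Phi b) (Phi c) := by
  simp only [Phi_apply, bary]; ext <;> simp <;> ring

lemma Phi_zero : Phi 0 = ((0 : ℝ), (0 : ℝ)) := by simp [Phi_apply]

lemma hexCorner_eq {i : ℕ} (hi : i < 7) : hexCorner i = Phi (cor i) := by
  have e2 : (2 : ℝ) * (Real.pi / 3) = Real.pi - Real.pi / 3 := by ring
  have e3 : (3 : ℝ) * (Real.pi / 3) = Real.pi := by ring
  have e4 : (4 : ℝ) * (Real.pi / 3) = Real.pi / 3 + Real.pi := by ring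
  have e5 : (5 : ℝ) * (Real.pi / 3) = 2 * Real.pi - Real.pi / 3 := by ring
  have e6 : (6 : ℝ) * (Real.pi / 3) = 2 * Real.pi := by ring
  interval_cases i
  · simp [hexCorner, Phi_apply, cor]
  · simp [hexCorner, Phi_apply, cor]
  · simp only [hexCorner, Phi_apply, cor, Nat.cast_ofNat, e2, Real.cos_pi_sub, Real.sin_pi_sub,
      Real.cos_pi_div_three, Real.sin_pi_div_three]
    ext <;> norm_num
  · simp [hexCorner, Phi_apply, cor, e3]
  · simp only [hexCorner, Phi_apply, cor, Nat.cast_ofNat, e4, Real.cos_add_pi, Real.sin_add_pi,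
      Real.cos_pi_div_three, Real.sin_pi_div_three]
    ext <;> norm_num
  · simp only [hexCorner, Phi_apply, cor, Nat.cast_ofNat, e5, Real.cos_two_pi_sub,
      Real.sin_two_pi_sub, Real.cos_pi_div_three, Real.sin_pi_div_three]
    ext <;> norm_num
  · simp [hexCorner, Phi_apply, cor, e6]

lemma TriSet_one (i : Fin 6) : (hexCorner i, hexCorner (i + 1), ((0:ℝ), (0:ℝ))) =
    (Phi (cor i), Phi (cor (i + 1)), Phi 0) := by
  have hi := i.isLt
  rw [hexCorner_eq (by omega), Phi_zero]
  fin_cases i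
  all_goals simp [hexCorner_eq, cor]

/-- Every triangle in `TriSet (d + 1)` comes from `Tri d`. -/
lemma TriSet_tri {d : ℕ} {t : Pt × Pt × Pt} (ht : t ∈ TriSet (d + 1)) :
    ∃ a b c, Tri d a b c ∧ t = (Phi a, Phi b, Phi c) := by
  induction d generalizing t with
  | zero =>
    obtain ⟨i, rfl⟩ := ht
    exact ⟨_, _, _, Tri.base i i.isLt, TriSet_one i⟩
  | succ d ih =>
    simp only [TriSet, Set.mem_iUnion] at ht
    obtain ⟨s, hs, ht⟩ := ht
    obtain ⟨a, b, c, h, rfl⟩ := ih hs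
    have b1 : bary b a c = bary a b c := bary_eq (by abel)
    have b2 : bary b c a = bary a b c := bary_eq (by abel)
    have b3 : bary c b a = bary a b c := bary_eq (by abel)
    have b4 : bary a c b = bary a b c := bary_eq (by abel)
    have b5 : bary c a b = bary a b c := bary_eq (by abel)
    simp only [children, ← Phi_mpt, ← Phi_bary, Set.mem_insert_iff, Set.mem_singleton_iff] at ht
    rcases ht with rfl | rfl | rfl | rfl | rfl | rfl
    · exact ⟨_, _, _, h.child, rfl⟩
    · exact ⟨_, _, _, h.swap.child, by rw [b1, mpt_comm b a]⟩
    · exact ⟨_, _, _, h.rot.child, by rw [b2]⟩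
    · exact ⟨_, _, _, h.rot.swap.child, by rw [b3, mpt_comm c b]⟩
    · exact ⟨_, _, _, h.rot.rot.swap.child, by rw [b4]⟩
    · exact ⟨_, _, _, h.rot.rot.child, by rw [b5, mpt_comm c a]⟩

/-- Some ordering of `x, y, z` belongs to `TriSet n`, which lists each triangle in one order only. -/
def Lst (n : ℕ) (x y z : Pt) : Prop :=
  (x, y, z) ∈ TriSet n ∨ (y, x, z) ∈ TriSet n ∨ (y, z, x) ∈ TriSet n ∨ (z, y, x) ∈ TriSet n ∨
    (z, x, y) ∈ TriSet n ∨ (x, z, y) ∈ TriSet n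

/-- Conversely, every triangle in `Tri d` belongs to `TriSet (d + 1)` up to ordering. -/
lemma Tri.lst {d a b c} (h : Tri d a b c) : Lst (d + 1) (Phi a) (Phi b) (Phi c) := by
  induction h with
  | base i hi => exact Or.inl ⟨⟨i, hi⟩, (TriSet_one ⟨i, hi⟩).symm⟩
  | @child d a b c _ ih =>
    rw [Phi_mpt, Phi_bary]
    generalize Phi a = x, Phi b = y, Phi c = z at ih
    have b1 : bary y x z = bary x y z := bary_eq (by abel)
    have b2 : bary y z x = bary x y z := bary_eq (by abel)
    have b3 : bary z y x = bary x y z := bary_eq (by abel)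
    have b4 : bary x z y = bary x y z := bary_eq (by abel)
    have b5 : bary z x y = bary x y z := bary_eq (by abel)
    refine Or.inl ?_
    simp only [TriSet, Set.mem_iUnion]
    rcases ih with h | h | h | h | h | h <;> refine ⟨_, h, ?_⟩ <;>
      simp [children, b1, b2, b3, b4, b5, mpt_comm y x]
  | swap _ ih => unfold Lst at *; tauto
  | rot _ ih => unfold Lst at *; tauto

lemma Lst.simp2 {n x y z} (h : Lst n x y z) : ({x, y, z} : Set Pt) ∈ Simp2 n := by
  rcases h with h | h | h | h | h | h <;> refine ⟨_, h, ?_⟩ <;> ext w <;> simp <;> tauto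

lemma Lst.simp1 {n x y z} (h : Lst n x y z) : ({x, y} : Set Pt) ∈ Simp1 n := by
  rcases h with h | h | h | h | h | h <;> refine ⟨_, h, ?_⟩ <;> simp [Set.pair_comm y x]

lemma Lst.simp0 {n x y z} (h : Lst n x y z) : x ∈ Simp0 n := by
  rcases h with h | h | h | h | h | h <;> exact ⟨_, h, by simp⟩

lemma simp0_iff {d : ℕ} {p : Pt} : Phi p ∈ Simp0 (d + 1) ↔ Vtx d p := by
  constructor
  · rintro ⟨t, ht, h⟩
    obtain ⟨a, b, c, hT, rfl⟩ := TriSet_tri ht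
    simp only [Phi.injective.eq_iff] at h
    rcases h with rfl | rfl | rfl
    exacts [⟨_, _, hT⟩, ⟨_, _, hT.rot⟩, ⟨_, _, hT.rot.rot⟩]
  · rintro ⟨q, r, h⟩
    exact h.lst.simp0

lemma simp1_iff {d : ℕ} {p q : Pt} :
    (Phi p ≠ Phi q ∧ ({Phi p, Phi q} : Set Pt) ∈ Simp1 (d + 1)) ↔ Adj d p q := by
  constructor
  · rintro ⟨-, t, ht, h⟩
    obtain ⟨a, b, c, hT, rfl⟩ := TriSet_tri ht
    simp only [Set.pair_eq_pair_iff, Phi.injective.eq_iff] at h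
    rcases h with (⟨rfl, rfl⟩ | ⟨rfl, rfl⟩) | (⟨rfl, rfl⟩ | ⟨rfl, rfl⟩) | (⟨rfl, rfl⟩ | ⟨rfl, rfl⟩)
    exacts [⟨_, hT⟩, ⟨_, hT.swap⟩, ⟨_, hT.rot⟩, ⟨_, hT.rot.swap⟩, ⟨_, hT.rot.rot.swap⟩, ⟨_, hT.rot.rot⟩]
  · rintro ⟨r, h⟩
    exact ⟨Phi.injective.ne h.ne12, h.lst.simp1⟩

/-- The triangles of `T_{d+1}` containing an edge correspond to the third vertices. -/
lemma simp2_eq {d : ℕ} {p q : Pt} (hpq : p ≠ q) :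
    {f ∈ Simp2 (d + 1) | Phi p ∈ f ∧ Phi q ∈ f} =
      (fun r => ({Phi p, Phi q, Phi r} : Set Pt)) '' {r | Tri d p q r} := by
  ext s
  constructor
  · rintro ⟨⟨t, ht, rfl⟩, hp, hq⟩
    obtain ⟨a, b, c, hT, rfl⟩ := TriSet_tri ht
    simp only [Set.mem_insert_iff, Set.mem_singleton_iff, Phi.injective.eq_iff] at hp hq
    rcases hp with rfl | rfl | rfl <;> rcases hq with rfl | rfl | rfl <;>
    first
    | exact absurd rfl hpq
    | exact ⟨_, hT, by ext w; simp⟩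
    | exact ⟨_, hT.swap, by ext w; simp; tauto⟩
    | exact ⟨_, hT.rot, by ext w; simp; tauto⟩
    | exact ⟨_, hT.rot.swap, by ext w; simp; tauto⟩
    | exact ⟨_, hT.rot.rot, by ext w; simp; tauto⟩
    | exact ⟨_, hT.rot.rot.swap, by ext w; simp; tauto⟩
  · rintro ⟨r, hr, rfl⟩
    exact ⟨Tri.lst hr |>.simp2, by simp, by simp⟩

lemma cT_eq (d : ℕ) (p q : Pt) : cT (d + 1) (Phi p) (Phi q) = cc d p q := by
  unfold cT cc
  by_cases h : Adj d p q
  · rw [if_pos (simp1_iff.2 h), if_pos h]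
    have hpq : p ≠ q := by
      obtain ⟨r, hr⟩ := h; exact hr.ne12
    have hinj : Set.InjOn (fun r => ({Phi p, Phi q, Phi r} : Set Pt)) {r | Tri d p q r} := by
      intro r hr r' hr' he
      have hr : Tri d p q r := hr
      have : Phi r ∈ ({Phi p, Phi q, Phi r'} : Set Pt) := by
        have he : ({Phi p, Phi q, Phi r} : Set Pt) = {Phi p, Phi q, Phi r'} := he
        rw [← he]; simp
      simp only [Set.mem_insert_iff, Set.mem_singleton_iff, Phi.injective.eq_iff] at this
      rcases this with h | h | h
      exacts [absurd h.symm hr.ne13, absurd h.symm hr.ne23, h]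
    rw [simp2_eq hpq, hinj.ncard_image]
    have : {r | Tri d p q r}.ncard = 1 ↔ ∃! r, Tri d p q r := by
      rw [Set.ncard_eq_one]
      constructor
      · rintro ⟨a, ha⟩
        have ha : ∀ r, Tri d p q r ↔ r = a := fun r => Set.ext_iff.1 ha r
        exact ⟨a, (ha a).2 rfl, fun y hy => (ha y).1 hy⟩
      · rintro ⟨a, ha, h⟩
        exact ⟨a, Set.ext fun r => ⟨h r, fun e => by rw [Set.mem_singleton_iff.1 e]; exact ha⟩⟩
    by_cases h1 : ∃! r, Tri d p q r
    · rw [if_pos (this.2 h1), if_pos h1]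
    · rw [if_neg (mt this.1 h1), if_neg h1]
  · rw [if_neg (mt simp1_iff.1 h), if_neg h]

lemma side2_iff {p : Pt} (h : Hex p) : Phi p ∈ hexSide 2 ↔ p.1 = -1 := by
  have h3 : 0 < √3 / 2 := by positivity
  rw [hexSide, hexCorner_eq (by norm_num), hexCorner_eq (by norm_num)]
  constructor
  · rintro ⟨a, b, ha, hb, hab, he⟩
    have e1 := congrArg Prod.fst he
    have e2 := congrArg Prod.snd he
    simp only [Phi_apply, cor, Prod.fst_add, Prod.snd_add, Prod.smul_mk, smul_eq_mul] at e1 e2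
    have e3 : a = p.2 := by
      refine mul_right_cancel₀ h3.ne' ?_
      linarith
    linarith
  · intro hp
    have hb : 0 ≤ p.2 ∧ p.2 ≤ 1 := by
      obtain ⟨i, hi, h1, h2, h3⟩ := h
      interval_cases i <;> simp [al, be, cor] at h1 h2 h3 <;> constructor <;> linarith
    refine ⟨p.2, 1 - p.2, hb.1, by linarith, by ring, ?_⟩
    ext
    · simp [Phi_apply, cor, hp]; ring
    · simp [Phi_apply, cor]

lemma side5_iff {p : Pt} (h : Hex p) : Phi p ∈ hexSide 5 ↔ p.1 = 1 := by
  have h3 : 0 < √3 / 2 := by positivity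
  rw [hexSide, hexCorner_eq (by norm_num), hexCorner_eq (by norm_num)]
  constructor
  · rintro ⟨a, b, ha, hb, hab, he⟩
    have e1 := congrArg Prod.fst he
    have e2 := congrArg Prod.snd he
    simp only [Phi_apply, cor, Prod.fst_add, Prod.snd_add, Prod.smul_mk, smul_eq_mul] at e1 e2
    have e3 : -a = p.2 := by
      refine mul_right_cancel₀ h3.ne' ?_
      linarith
    linarith
  · intro hp
    have hb : -1 ≤ p.2 ∧ p.2 ≤ 0 := by
      obtain ⟨i, hi, h1, h2, h3⟩ := h
      interval_cases i <;> simp [al, be, cor] at h1 h2 h3 <;> constructor <;> linarith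
    refine ⟨-p.2, 1 + p.2, by linarith, by linarith, by ring, ?_⟩
    ext
    · simp [Phi_apply, cor, hp]; ring
    · simp [Phi_apply, cor]

lemma Vtx.hex {d p} (h : Vtx d p) : Hex p := by
  obtain ⟨q, r, h⟩ := h; exact h.hex.1

lemma energy_Phi (d : ℕ) (f : Pt → ℝ) : energy (cT (d + 1)) f = En d (f ∘ Phi) := by
  unfold En energy
  rw [← Phi.tsum_eq]
  congr 2
  funext p
  rw [← Phi.tsum_eq]
  simp only [cT_eq, Function.comp]

lemma RT_eq (d : ℕ) : RT (d + 1) = (cap d)⁻¹ := by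
  unfold RT effRes cap
  congr 2
  ext e
  constructor
  · rintro ⟨f, hA, hB, rfl⟩
    refine ⟨f ∘ Phi, ⟨fun p hp h => hA _ ⟨simp0_iff.2 hp, (side2_iff hp.hex).2 h⟩,
      fun p hp h => hB _ ⟨simp0_iff.2 hp, (side5_iff hp.hex).2 h⟩⟩, energy_Phi d f⟩
  · rintro ⟨f, ⟨hA, hB⟩, rfl⟩
    refine ⟨f ∘ Phi.symm, ?_, ?_, ?_⟩
    · rintro x ⟨h1, h2⟩
      obtain ⟨p, rfl⟩ := Phi.surjective x
      have hv := simp0_iff.1 h1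
      simpa using hA p hv ((side2_iff hv.hex).1 h2)
    · rintro x ⟨h1, h2⟩
      obtain ⟨p, rfl⟩ := Phi.surjective x
      have hv := simp0_iff.1 h1
      simpa using hB p hv ((side5_iff hv.hex).1 h2)
    · rw [energy_Phi]; congr 1; funext p; simp

theorem main_ineq {m n : ℕ} (hm : 1 ≤ m) (hn : 1 ≤ n) : (3 / 4 : ℝ) * RT m * RT n ≤ RT (m + n) := by
  obtain ⟨d, rfl⟩ := Nat.exists_eq_add_of_le' hm
  obtain ⟨e, rfl⟩ := Nat.exists_eq_add_of_le' hn
  rw [show d + 1 + (e + 1) = (d + e + 1) + 1 by ring, RT_eq, RT_eq, RT_eq]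
  have := cap_le d e
  have h1 := cap_pos d
  have h2 := cap_pos e
  calc (3 / 4 : ℝ) * (cap d)⁻¹ * (cap e)⁻¹ = (4 / 3 * (cap d * cap e))⁻¹ := by
        rw [mul_inv, mul_inv]; norm_num; ring
    _ ≤ _ := inv_anti₀ (cap_pos _) this

end BarycentricHexacarpet

namespace BarycentricHexacarpet

/-- Supermultiplicative estimate for the 1-skeleton resistances. -/
theorem skeleton_supermultiplicative (m n : ℕ) (hm : 1 ≤ m) (hn : 1 ≤ n) :
    RT (m + n) ≥ (3 / 4) * RT m * RT n := main_ineq hm hn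

end BarycentricHexacarpet
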